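/- arXiv:math/0312413 — 2 statements merged into one kernel-verified Lean document; each statement's English description precedes it below -/
import Mathlib

section
/- Let S be a scheme and let P → S and P′ → S be ℙ¹-bundles over S. Let D be a closed subscheme of P and D′ a closed subscheme of P′ such that D → S and D′ → S are étale covers of degree 3, and let η : D → D′ be an S-isomorphism. Then there exists a unique S-isomorphism α : P → P′ such that α restricted to D equals η (i.e., α ∘ ι_D = ι_{D′} ∘ η for the inclusions ι_D : D → P and ι_{D′} : D′ → P′). -/
universe u

open AlgebraicGeometry CategoryTheory CategoryTheory.Limits

attribute [local instance] MvPolynomial.gradedAlgebra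

/-- The projective line over `ℤ`, i.e. `Proj ℤ[X₀, X₁]`. -/
noncomputable def P1Z : Scheme.{u} :=
  AlgebraicGeometry.Proj (MvPolynomial.homogeneousSubmodule (Fin 2) (ULift.{u} ℤ))

/-- The projective line `ℙ¹_S` over a scheme `S`, i.e. the base change to `S` of
`Proj ℤ[X₀, X₁]` (the fibre product over the terminal scheme, which is `Spec ℤ`). -/
noncomputable def P1 (S : Scheme.{u}) : Scheme.{u} :=
  pullback (terminal.from S) (terminal.from P1Z)

/-- The structure morphism `ℙ¹_S ⟶ S`. -/
noncomputable def P1proj (S : Scheme.{u}) : P1 S ⟶ S :=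
  pullback.fst (terminal.from S) (terminal.from P1Z)

/-- `f : D ⟶ S` is an étale cover of degree `n`: a finite étale surjection all of whose
geometric fibres consist of `n` points. -/
def IsEtaleCoverOfDegree (n : ℕ) {D S : Scheme.{u}} (f : D ⟶ S) : Prop :=
  IsFinite f ∧ IsEtale f ∧ Function.Surjective f.base ∧
    ∀ (K : Type u) [Field K] [IsAlgClosed K]
      (x : Spec (CommRingCat.of K) ⟶ S), Nat.card (pullback f x : Scheme.{u}) = n

/-- `f : P ⟶ S` is a `ℙ¹`-bundle: locally on `S`, `P` is `S`-isomorphic to `ℙ¹`, i.e. there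
is an open cover of `S` by opens `U` together with `U`-isomorphisms `P ×_S U ≅ ℙ¹_U`. -/
def IsP1Bundle {P S : Scheme.{u}} (f : P ⟶ S) : Prop :=
  ∀ x : S, ∃ U : S.Opens, x ∈ U ∧
    ∃ e : pullback f U.ι ≅ P1 (U : Scheme.{u}),
      e.hom ≫ P1proj (U : Scheme.{u}) = pullback.snd f U.ι

/-!
An isomorphism of `ℙ¹`-bundles compatible with the markings is a local datum for the fppf topology,
so it suffices to find a covering of `S` over whose members it exists uniquely. Étale-locally on
`S`, the scheme `D` splits into three copies of `S`, so that each bundle acquires three disjoint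
sections; Zariski-locally both bundles are moreover trivial, and a suitable element of `GL₂` moves
the three sections to `0`, `∞` and `1`. Composing two such trivializations gives the isomorphism.

It is unique by rigidity: over an affine base, an automorphism of `ℙ¹` fixing `0` and `∞` is given
on the chart around `0` by a polynomial `q = T u(T)` with `u` invertible, and on the chart around
`∞` by a polynomial `r = T w(T)`, where `q(T) r(T⁻¹) = 1`. Hence `u(T)⁻¹ = w(T⁻¹)` is constant, and
it equals `1` if the automorphism fixes the section `1` too.
-/

/-! ### Descent of marked isomorphisms -/

section Descent

variable {C : Type*} [Category* C] {S P P' D : C}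
  {f : P ⟶ S} {f' : P' ⟶ S} {j : D ⟶ P} {j' : D ⟶ P'}

theorem eq_of_comp_eq_of_mem {J : GrothendieckTopology C} [J.Subcanonical] {X Y : C} {R : Sieve X}
    (hR : R ∈ J X) {a b : X ⟶ Y} (h : ∀ ⦃Z : C⦄ (g : Z ⟶ X), R g → g ≫ a = g ≫ b) : a = b :=
  (GrothendieckTopology.Subcanonical.isSheaf_of_isRepresentable (J := J) (yoneda.obj Y) R
    hR).isSeparatedFor.ext h

theorem exists_comp_eq_of_mem {J : GrothendieckTopology C} [J.Subcanonical] {X Y : C} {R : Sieve X}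
    (hR : R ∈ J X) (x : ∀ ⦃Z : C⦄ (g : Z ⟶ X), R g → (Z ⟶ Y))
    (hx : ∀ ⦃Z W : C⦄ (k : W ⟶ Z) (g : Z ⟶ X) (hg : R g),
      x (k ≫ g) (R.downward_closed hg k) = k ≫ x g hg) :
    ∃ φ : X ⟶ Y, ∀ ⦃Z : C⦄ (g : Z ⟶ X) (hg : R g), g ≫ φ = x g hg := by
  have sheaf := GrothendieckTopology.Subcanonical.isSheaf_of_isRepresentable (J := J)
    (yoneda.obj Y) R hR
  have compatible : Presieve.FamilyOfElements.Compatible (P := yoneda.obj Y) (R := R.arrows) x :=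
    (Presieve.compatible_iff_sieveCompatible _).2 fun Z W g k hg ↦ hx k g hg
  exact ⟨sheaf.amalgamate x compatible, fun Z g hg ↦ sheaf.valid_glue compatible g hg⟩

variable [HasPullbacks C]

theorem isIso_of_isPullback_of_mem {J : GrothendieckTopology C} [J.Subcanonical] {R : Sieve S}
    (hR : R ∈ J S) {φ : P ⟶ P'} (hφ : φ ≫ f' = f)
    (h : ∀ ⦃T : C⦄ (g : T ⟶ S), R g →
      IsPullback (pullback.fst f g ≫ φ) (pullback.snd f g) f' g) : IsIso φ := by
  have mono : Mono φ := ⟨fun {Z} x y hxy ↦ by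
    have hf : y ≫ f = x ≫ f := by rw [← hφ, reassoc_of% hxy]
    refine eq_of_comp_eq_of_mem (J.pullback_stable (x ≫ f) hR) fun W k hk ↦ ?_
    have lift_eq : pullback.lift (k ≫ x) (𝟙 W) (by simp) =
        pullback.lift (f := f) (g := k ≫ x ≫ f) (k ≫ y) (𝟙 W) (by simp [hf]) :=
      (h _ hk).hom_ext
        (by simp only [pullback.lift_fst_assoc, Category.assoc, hxy])
        (by simp only [pullback.lift_snd])
    simpa only [pullback.lift_fst] using congr($lift_eq ≫ pullback.fst _ _)⟩
  obtain ⟨ψ, hψ⟩ := exists_comp_eq_of_mem (J.pullback_stable f' hR)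
    (fun W k hk ↦ (h (k ≫ f') hk).lift k (𝟙 W) (by simp) ≫ pullback.fst _ _)
    (fun W W' m k hk ↦ by simp [← cancel_mono φ])
  have hψφ : ψ ≫ φ = 𝟙 P' := eq_of_comp_eq_of_mem (J.pullback_stable f' hR) fun W k hk ↦ by
    simp [reassoc_of% hψ k hk]
  exact ⟨ψ, by simp [← cancel_mono φ, hψφ], hψφ⟩

/-- The projection from the base change of `P` along `k ≫ g` to its base change along `g`. The
composite is given as a variable `g'`, so that it need not be of this form syntactically. -/
noncomputable abbrev baseChangeMap (f : P ⟶ S) {T T' : C} {g : T ⟶ S} {g' : T' ⟶ S} (k : T' ⟶ T)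
    (hk : g' = k ≫ g) : pullback f g' ⟶ pullback f g :=
  pullback.lift (pullback.fst f g') (pullback.snd f g' ≫ k)
    (by rw [pullback.condition, hk, Category.assoc])

theorem isPullback_baseChangeMap (f : P ⟶ S) {T T' : C} {g : T ⟶ S} {g' : T' ⟶ S} (k : T' ⟶ T)
    (hk : g' = k ≫ g) :
    IsPullback (baseChangeMap f k hk) (pullback.snd f g') (pullback.snd f g) k := by
  subst hk
  refine IsPullback.of_right ?_ (pullback.lift_snd _ _ _) (IsPullback.of_hasPullback f g)
  simpa only [pullback.lift_fst] using IsPullback.of_hasPullback f (k ≫ g)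

theorem lift_comp_baseChangeMap {T T' Z : C} {g : T ⟶ S} {g' : T' ⟶ S} {k : T' ⟶ T}
    (hk : g' = k ≫ g) {p : Z ⟶ P} {t : Z ⟶ T'} (h : p ≫ f = t ≫ g') :
    pullback.lift p t h ≫ baseChangeMap f k hk =
      pullback.lift p (t ≫ k) (by rw [h, hk, Category.assoc]) := by
  ext <;> simp only [Category.assoc, pullback.lift_fst, pullback.lift_snd, pullback.lift_snd_assoc]

/-- A morphism from the base change of `P` along `g` to `P'` which is the same datum as an
isomorphism, over the source of `g`, between the base changes of `P` and `P'` that carries the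
marking `j` to the marking `j'`. -/
structure IsMarkedIsoOver (f : P ⟶ S) (f' : P' ⟶ S) (j : D ⟶ P) (j' : D ⟶ P') {T : C}
    (g : T ⟶ S) (a : pullback f g ⟶ P') : Prop where
  isPullback : IsPullback a (pullback.snd f g) f' g
  lift_comp : ∀ ⦃Z : C⦄ (d : Z ⟶ D) (t : Z ⟶ T) (h : (d ≫ j) ≫ f = t ≫ g),
    pullback.lift (d ≫ j) t h ≫ a = d ≫ j'

theorem IsMarkedIsoOver.baseChange {T T' : C} {g : T ⟶ S} {a : pullback f g ⟶ P'}
    (ha : IsMarkedIsoOver f f' j j' g a) {k : T' ⟶ T} {g' : T' ⟶ S} (hk : g' = k ≫ g) :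
    IsMarkedIsoOver f f' j j' g'
      (baseChangeMap f k hk ≫ a) where
  isPullback := by
    subst hk
    exact (isPullback_baseChangeMap f k rfl).paste_horiz ha.isPullback
  lift_comp Z d t h := by
    rw [← Category.assoc, lift_comp_baseChangeMap, ha.lift_comp]

theorem isMarkedIsoOver_fst_comp {α : P ⟶ P'} [IsIso α] (hα : α ≫ f' = f) (hj : j ≫ α = j')
    {T : C} (g : T ⟶ S) : IsMarkedIsoOver f f' j j' g (pullback.fst f g ≫ α) where
  isPullback := (IsPullback.of_hasPullback f g).of_iso (Iso.refl _) (asIso α) (Iso.refl _)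
    (Iso.refl _) (by simp) (by simp) (by simp [hα]) (by simp)
  lift_comp Z d t h := by simp [pullback.lift_fst_assoc, hj]

theorem exists_fst_comp_eq_of_mem {J : GrothendieckTopology C} [J.Subcanonical] {R : Sieve S}
    (hR : R ∈ J S) (a : ∀ ⦃T : C⦄ (g : T ⟶ S), R g → (pullback f g ⟶ P'))
    (ha : ∀ ⦃T T' : C⦄ {g : T ⟶ S} {g' : T' ⟶ S} (hg : R g) (hg' : R g') {k : T' ⟶ T}
      (hk : g' = k ≫ g), baseChangeMap f k hk ≫ a g hg = a g' hg') :
    ∃ φ : P ⟶ P', ∀ ⦃T : C⦄ (g : T ⟶ S) (hg : R g), pullback.fst f g ≫ φ = a g hg := by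
  have lift_id_comp ⦃W T : C⦄ (p : W ⟶ P) (hp : R (p ≫ f)) (k : W ⟶ T) (g : T ⟶ S) (hg : R g)
      (w : p ≫ f = k ≫ g) :
      pullback.lift p (𝟙 W) (Category.id_comp _).symm ≫ a (p ≫ f) hp =
        pullback.lift p k w ≫ a g hg := by
    simp only [← ha hg hp w, ← Category.assoc, lift_comp_baseChangeMap, Category.id_comp]
  obtain ⟨φ, hφ⟩ := exists_comp_eq_of_mem (J.pullback_stable f hR)
    (fun W p hp ↦ pullback.lift p (𝟙 W) (Category.id_comp _).symm ≫ a (p ≫ f) hp)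
    (fun W W' k p hp ↦ by
      refine (lift_id_comp (k ≫ p) _ k (p ≫ f) hp (Category.assoc _ _ _)).trans ?_
      rw [← Category.assoc]
      congr 1
      ext <;> simp [pullback.lift_fst, pullback.lift_snd])
  refine ⟨φ, fun T g hg ↦ ?_⟩
  have hp : R (pullback.fst f g ≫ f) :=
    pullback.condition (f := f) (g := g) ▸ R.downward_closed hg _
  rw [hφ _ hp, lift_id_comp _ hp (pullback.snd f g) g hg pullback.condition]
  have lift_fst_snd : pullback.lift (pullback.fst f g) (pullback.snd f g) pullback.condition =
      𝟙 (pullback f g) := by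
    ext <;> simp
  rw [lift_fst_snd, Category.id_comp]

theorem existsUnique_markedIso_of_mem {J : GrothendieckTopology C} [J.Subcanonical] {R : Sieve S}
    (hR : R ∈ J S)
    (h : ∀ ⦃T : C⦄ (g : T ⟶ S), R g → ∃! a, IsMarkedIsoOver f f' j j' g a) :
    ∃! α : P ⟶ P', IsIso α ∧ α ≫ f' = f ∧ j ≫ α = j' := by
  choose a ha ha_unique using h
  obtain ⟨φ, hφ⟩ := exists_fst_comp_eq_of_mem hR a fun T T' g g' hg hg' k hk ↦
    ha_unique g' hg' _ ((ha g hg).baseChange hk)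
  have lift_comp ⦃W : C⦄ (p : W ⟶ P) (hp : R (p ≫ f)) :
      p ≫ φ = pullback.lift p (𝟙 W) (Category.id_comp _).symm ≫ a (p ≫ f) hp := by
    rw [← hφ, pullback.lift_fst_assoc]
  have comp_f' : φ ≫ f' = f := eq_of_comp_eq_of_mem (J.pullback_stable f hR) fun W p hp ↦ by
    rw [← Category.assoc, lift_comp p hp, Category.assoc, (ha _ hp).isPullback.w,
      pullback.lift_snd_assoc, Category.id_comp]
  have j_comp : j ≫ φ = j' :=
    eq_of_comp_eq_of_mem (J.pullback_stable (j ≫ f) hR) fun W d (hd : R (d ≫ j ≫ f)) ↦ by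
      rw [← Category.assoc] at hd ⊢
      rw [lift_comp (d ≫ j) hd, (ha _ hd).lift_comp]
  have isIso : IsIso φ := isIso_of_isPullback_of_mem hR comp_f' fun T g hg ↦ by
    rw [hφ g hg]
    exact (ha g hg).isPullback
  refine ⟨φ, ⟨isIso, comp_f', j_comp⟩, fun β ⟨_, hβ, hjβ⟩ ↦
    eq_of_comp_eq_of_mem (J.pullback_stable f hR) fun W p hp ↦ ?_⟩
  rw [lift_comp p hp, ← ha_unique _ hp _ (isMarkedIsoOver_fst_comp hβ hjβ (p ≫ f)),
    pullback.lift_fst_assoc]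

end Descent

section Coverings

variable {X : Scheme.{u}}

theorem mem_fppfTopology_of_etale {R : Sieve X}
    (h : ∀ x : X, ∃ (Y : Scheme.{u}) (g : Y ⟶ X), Etale g ∧ x ∈ Set.range g ∧ R g) :
    R ∈ Scheme.fppfTopology X := by
  choose Y g hg hx hR using h
  have hcover : Presieve.ofArrows Y g ∈ Scheme.fppfPrecoverage X := by
    rw [Scheme.fppfPrecoverage, Scheme.ofArrows_mem_precoverage_iff]
    exact ⟨fun x ↦ ⟨x, hx x⟩, fun x ↦ have := hg x; ⟨inferInstance, inferInstance⟩⟩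
  refine GrothendieckTopology.superset_covering _ ?_
    (Precoverage.generate_mem_toGrothendieck hcover)
  rw [Sieve.generate_le_iff]
  rintro _ _ ⟨x⟩
  exact hR x

theorem mem_fppfTopology_of_opens {R : Sieve X}
    (h : ∀ x : X, ∃ U : X.Opens, x ∈ U ∧ R U.ι) : R ∈ Scheme.fppfTopology X :=
  mem_fppfTopology_of_etale fun x ↦
    have ⟨U, hxU, hU⟩ := h x
    ⟨U, U.ι, inferInstance, by simpa using hxU, hU⟩

theorem isUnit_of_basicOpen_eq_top {a : Γ(X, ⊤)} (h : X.basicOpen a = ⊤) : IsUnit a :=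
  RingedSpace.isUnit_of_isUnit_germ _ ⊤ a fun x _ ↦
    (Scheme.mem_basicOpen_top X a x).1 (h.symm ▸ trivial)

end Coverings

/-! ### Homogeneous coordinates on the projective line -/

namespace P1Z

open HomogeneousLocalization MvPolynomial

section HomogeneousCoordinateRing

variable {B : Type u} [CommRing B]

/-- The homogeneous coordinate ring `ℤ[X₀, X₁]` of the projective line. -/
abbrev CoordRing : Type u := MvPolynomial (Fin 2) (ULift.{u} ℤ)

/-- The grading of `ℤ[X₀, X₁]` by degree, whose `Proj` is the projective line. -/
noncomputable abbrev grading : ℕ → Submodule (ULift.{u} ℤ) CoordRing.{u} :=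
  homogeneousSubmodule (Fin 2) (ULift.{u} ℤ)

theorem X_mem_grading_one (i : Fin 2) : (X i : CoordRing.{u}) ∈ grading.{u} 1 :=
  isHomogeneous_X _ i

theorem adjoin_range_X :
    Algebra.adjoin (grading.{u} 0) (Set.range (X : Fin 2 → CoordRing.{u})) = ⊤ := by
  refine eq_top_iff.2 fun (p : CoordRing.{u}) _ ↦ ?_
  induction p using MvPolynomial.induction_on with
  | C a =>
    exact Subalgebra.algebraMap_mem
      (Algebra.adjoin (grading.{u} 0) (Set.range (X : Fin 2 → CoordRing.{u})))
      ⟨C a, isHomogeneous_C _ _⟩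
  | add p q hp hq => exact add_mem (hp trivial) (hq trivial)
  | mul_X p i hp => exact mul_mem (hp trivial) (Algebra.subset_adjoin ⟨i, rfl⟩)

/-- Evaluation of homogeneous polynomials at a vector of homogeneous coordinates. -/
noncomputable def eval (v : Fin 2 → B) : CoordRing.{u} →+* B :=
  eval₂Hom ((Int.castRingHom B).comp (ULift.ringEquiv.{0, u} : ULift.{u} ℤ ≃+* ℤ).toRingHom) v

@[simp]
theorem eval_X (v : Fin 2 → B) (i : Fin 2) : eval v (X i) = v i := by
  simp [eval]

/-- The coordinate function `X_k / X_i` on the `i`-th standard chart of the projective line. -/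
noncomputable def coord (i k : Fin 2) : Away grading.{u} (X i) :=
  Away.mk grading (X_mem_grading_one i) 1 (X k) (by simpa using X_mem_grading_one k)

theorem coord_pow_mul_coord_pow (i : Fin 2) {n : ℕ} {e : Fin 2 → ℕ}
    (h : ∏ k, (X k : CoordRing.{u}) ^ e k ∈ grading.{u} (n • 1)) (hn : e 0 + e 1 = n) :
    coord.{u} i 0 ^ e 0 * coord.{u} i 1 ^ e 1 =
      Away.mk grading (X_mem_grading_one i) n (∏ k, X k ^ e k) h := by
  refine val_injective _ ?_
  simp only [coord, val_mul, val_pow, Away.val_mk, Localization.mk_pow, Localization.mk_mul,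
    Fin.prod_univ_two, ← hn]
  congr 1
  ext
  simp [pow_add]

theorem away_ringHom_ext {i : Fin 2} {φ ψ : Away grading.{u} (X i) →+* B}
    (h : ∀ k, φ (coord i k) = ψ (coord i k)) : φ = ψ := by
  have mem_adjoin (z : Away grading.{u} (X i)) := (Algebra.eq_top_iff.1
    (Away.adjoin_mk_prod_pow_eq_top (X_mem_grading_one i) (Fin 2) X adjoin_range_X (fun _ ↦ 1)
      X_mem_grading_one)) z
  ext z
  induction mem_adjoin z using Algebra.adjoin_induction with
  | mem z hz =>
    obtain ⟨n, e, he, -, rfl⟩ := hz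
    have hpow (χ : Away grading.{u} (X i) →+* B) (k : Fin 2) :
        χ (coord i k ^ e k) = χ (coord i k) ^ e k := map_pow χ _ _
    rw [← coord_pow_mul_coord_pow i _ (by simpa using he), map_mul, map_mul, hpow, hpow, hpow,
      hpow, h, h]
  | algebraMap r =>
    obtain ⟨a, rfl⟩ : ∃ a, algebraMap (ULift.{u} ℤ) (grading.{u} 0) a = r :=
      ⟨_, Subtype.ext
        (totalDegree_eq_zero_iff_eq_C.1 ((totalDegree_zero_iff_isHomogeneous _).2 r.2)).symm⟩
    let ofInt (χ : Away grading.{u} (X i) →+* B) : ULift.{u} ℤ →+* B :=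
      (χ.comp (algebraMap (grading.{u} 0) _)).comp (algebraMap (ULift.{u} ℤ) (grading.{u} 0))
    exact (map_intCast (ofInt φ) a.down).trans (map_intCast (ofInt ψ) a.down).symm
  | add y z _ _ hy hz => rw [map_add, map_add, hy, hz]
  | mul y z _ _ hy hz => rw [map_mul, map_mul, hy, hz]

/-- The homomorphism `P / fⁿ ↦ P(v) / f(v)ⁿ` from a homogeneous localization of `ℤ[X₀, X₁]`. -/
noncomputable def evalAway (f : CoordRing.{u}) (v : Fin 2 → B) (h : IsUnit (eval v f)) :
    Away grading.{u} f →+* B :=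
  (Localization.awayLift (eval v) f h).comp
    (algebraMap (Away grading.{u} f) (Localization.Away f))

theorem evalAway_mk_mul_pow {f : CoordRing.{u}} {v : Fin 2 → B} (h : IsUnit (eval v f)) {d : ℕ}
    (hf : f ∈ grading.{u} d) (n : ℕ) (p : CoordRing.{u}) (hp : p ∈ grading.{u} (n • d)) :
    evalAway f v h (Away.mk grading hf n p hp) * eval v f ^ n = eval v p := by
  obtain ⟨w, hw⟩ := h.exists_right_inv
  simp only [evalAway, RingHom.coe_comp, Function.comp_apply,
    HomogeneousLocalization.algebraMap_apply, Away.val_mk]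
  rw [Localization.awayLift_mk _ _ _ _ hw, mul_assoc, ← mul_pow, mul_comm w]
  simp [hw]

theorem evalAway_comp_awayMap {f g p : CoordRing.{u}} {v : Fin 2 → B} {d e : ℕ}
    (hf : f ∈ grading.{u} d) (hg : g ∈ grading.{u} e) (hp : p = f * g)
    (hfv : IsUnit (eval v f)) (hpv : IsUnit (eval v p)) :
    (evalAway p v hpv).comp (awayMap grading hg hp) = evalAway f v hfv := by
  ext z
  obtain ⟨n, a, ha, rfl⟩ := Away.mk_surjective grading hf z
  rw [RingHom.comp_apply, awayMap_mk]
  refine (hpv.pow n).mul_right_cancel ?_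
  rw [evalAway_mk_mul_pow, hp, map_mul, map_mul, mul_pow, ← mul_assoc, evalAway_mk_mul_pow, map_pow]

theorem evalAway_coord_mul {i : Fin 2} {v : Fin 2 → B} (h : IsUnit (eval v (X i)))
    (k : Fin 2) : evalAway (X i) v h (coord i k) * v i = v k := by
  simpa only [eval_X, pow_one, coord] using
    evalAway_mk_mul_pow h (X_mem_grading_one i) 1 (X k) (by simpa using X_mem_grading_one k)

end HomogeneousCoordinateRing

theorem coord_self (i : Fin 2) : coord.{u} i i = 1 := by
  ext
  simp only [coord, Away.val_mk, val_one, pow_one]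
  exact Localization.mk_self ⟨X i, Submonoid.mem_powers _⟩

/-- The `i`-th standard chart `Spec ℤ[X₀ / X_i, X₁ / X_i]` of the projective line. -/
noncomputable def chart (i : Fin 2) : Spec (.of (Away grading.{u} (X i))) ⟶ P1Z.{u} :=
  Proj.awayι grading (X i) (X_mem_grading_one i) one_pos

instance (i : Fin 2) : IsOpenImmersion (chart.{u} i) :=
  inferInstanceAs (IsOpenImmersion (Proj.awayι grading (X i) (X_mem_grading_one i) one_pos))

theorem exists_mem_opensRange_chart (z : P1Z.{u}) : ∃ i, z ∈ (chart.{u} i).opensRange := by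
  have hcover := Proj.iSup_basicOpen_eq_top' grading.{u} X
    (fun i ↦ ⟨1, X_mem_grading_one i⟩) adjoin_range_X
  have hz : z ∈ (⊤ : (Proj grading.{u}).Opens) := trivial
  rw [← hcover] at hz
  obtain ⟨i, hi⟩ := (TopologicalSpace.Opens.mem_iSup (α := Proj grading.{u})).1 hz
  rw [← Proj.opensRange_awayι grading.{u} (X i) (X_mem_grading_one i) one_pos] at hi
  exact ⟨i, hi⟩

variable {X Y : Scheme.{u}}

/-- The morphism `[v₀ : v₁]` to the projective line given by homogeneous coordinates one of which
is invertible. -/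
noncomputable def affinePoint (i : Fin 2) (v : Fin 2 → Γ(X, ⊤)) (h : IsUnit (v i)) : X ⟶ P1Z :=
  X.toSpecΓ ≫ Spec.map (CommRingCat.ofHom
    (evalAway (.X i) v ((eval_X v i).symm ▸ h))) ≫ chart i

theorem toSpecΓ_comp_SpecMap_injective {R : CommRingCat.{u}} :
    Function.Injective fun φ : R ⟶ Γ(X, ⊤) ↦ X.toSpecΓ ≫ Spec.map φ := fun φ ψ h ↦ by
  have hφ (χ : R ⟶ Γ(X, ⊤)) : (Scheme.ΓSpecIso R).inv ≫ (X.toSpecΓ ≫ Spec.map χ).appTop = χ := by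
    simp [Scheme.toSpecΓ_appTop]
  rw [← hφ φ, ← hφ ψ]
  exact congr((Scheme.ΓSpecIso R).inv ≫ ($h).appTop)

theorem comp_affinePoint (g : Y ⟶ X) {i : Fin 2} {v : Fin 2 → Γ(X, ⊤)} (h : IsUnit (v i)) :
    g ≫ affinePoint i v h = affinePoint i (g.appTop.hom ∘ v) (h.map g.appTop.hom) := by
  rw [affinePoint, affinePoint, Scheme.toSpecΓ_naturality_assoc, ← Spec.map_comp_assoc]
  congr 3
  ext1
  refine away_ringHom_ext fun k ↦ (h.map g.appTop.hom).mul_right_cancel ?_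
  exact (map_mul g.appTop.hom _ _).symm.trans ((congr(g.appTop.hom $(evalAway_coord_mul _ k))).trans
    (evalAway_coord_mul (v := g.appTop.hom ∘ v) _ k).symm)

theorem affinePoint_eq_affinePoint_iff {i : Fin 2} {v w : Fin 2 → Γ(X, ⊤)}
    (hv : IsUnit (v i)) (hw : IsUnit (w i)) :
    affinePoint i v hv = affinePoint i w hw ↔ ∀ k, v i * w k = v k * w i := by
  have hv' (k) := evalAway_coord_mul (v := v) ((eval_X v i).symm ▸ hv) k
  have hw' (k) := evalAway_coord_mul (v := w) ((eval_X w i).symm ▸ hw) k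
  rw [affinePoint, affinePoint, ← Category.assoc, ← Category.assoc, cancel_mono,
    toSpecΓ_comp_SpecMap_injective.eq_iff]
  refine ⟨fun h k ↦ ?_, fun h ↦ ?_⟩
  · have hk : evalAway (.X i) v _ (coord i k) = evalAway (.X i) w _ (coord i k) :=
      congr(($h).hom (coord i k))
    linear_combination w i * hv' k - v i * hw' k - v i * w i * hk
  · congr 1
    refine away_ringHom_ext fun k ↦ (hv.mul hw).mul_right_cancel ?_
    linear_combination w i * hv' k - v i * hw' k - h k

theorem affinePoint_congr {i j : Fin 2} {v : Fin 2 → Γ(X, ⊤)} (hi : IsUnit (v i))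
    (hj : IsUnit (v j)) : affinePoint i v hi = affinePoint j v hj := by
  have hij : IsUnit (eval v (MvPolynomial.X i * MvPolynomial.X j)) := by simpa using hi.mul hj
  have hi' := evalAway_comp_awayMap (X_mem_grading_one i) (X_mem_grading_one j) rfl
    ((eval_X v i).symm ▸ hi) hij
  have hj' := evalAway_comp_awayMap (X_mem_grading_one j) (X_mem_grading_one i)
    (mul_comm (MvPolynomial.X i) _) ((eval_X v j).symm ▸ hj) hij
  rw [affinePoint, affinePoint, ← hi', ← hj', CommRingCat.ofHom_comp, CommRingCat.ofHom_comp,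
    Spec.map_comp_assoc, Spec.map_comp_assoc]
  congr 2
  exact (Proj.SpecMap_awayMap_awayι grading (X_mem_grading_one i) one_pos
    (X_mem_grading_one j) rfl).trans (Proj.SpecMap_awayMap_awayι grading (X_mem_grading_one j)
      one_pos (X_mem_grading_one i) (mul_comm (MvPolynomial.X i) _)).symm

theorem exists_eq_affinePoint {i : Fin 2} {φ : X ⟶ P1Z}
    (h : ∀ x, φ x ∈ (chart.{u} i).opensRange) :
    ∃ (v : Fin 2 → Γ(X, ⊤)) (hi : IsUnit (v i)), φ = affinePoint i v hi := by
  have hrange : Set.range φ ⊆ Set.range (chart.{u} i) := Set.range_subset_iff.2 h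
  let lift := IsOpenImmersion.lift (chart i) φ hrange
  let ψ := (Scheme.ΓSpecIso _).inv ≫ lift.appTop
  have hψ : lift = X.toSpecΓ ≫ Spec.map ψ := by
    rw [Spec.map_comp, ← Scheme.toSpecΓ_naturality_assoc, toSpecΓ_SpecMap_ΓSpecIso_inv,
      Category.comp_id]
  let v (k : Fin 2) : Γ(X, ⊤) := ψ.hom (coord i k)
  have hi : v i = 1 := by simp only [v, coord_self, map_one]
  refine ⟨v, hi ▸ isUnit_one, ?_⟩
  rw [← IsOpenImmersion.lift_fac (chart i) φ hrange, affinePoint]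
  change lift ≫ _ = _
  rw [hψ, Category.assoc]
  congr 3
  ext1
  refine away_ringHom_ext fun k ↦ ?_
  have hk := evalAway_coord_mul (v := v) ((eval_X v i).symm ▸ hi ▸ isUnit_one) k
  exact hk.symm.trans ((congrArg _ hi).trans (mul_one _))

theorem affinePoint_preimage_opensRange_chart {i : Fin 2} {v : Fin 2 → Γ(X, ⊤)} (h : IsUnit (v i))
    (k : Fin 2) : affinePoint i v h ⁻¹ᵁ (chart.{u} k).opensRange = X.basicOpen (v k) := by
  have hk := evalAway_coord_mul (v := v) ((eval_X v i).symm ▸ h) k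
  have hcoord : Away.isLocalizationElem (X_mem_grading_one.{u} i) (X_mem_grading_one k) =
      coord i k := by
    simp [Away.isLocalizationElem, coord]
  have hchart : chart.{u} i ⁻¹ᵁ (chart k).opensRange = PrimeSpectrum.basicOpen (coord i k) := by
    rw [← hcoord]
    refine .trans ?_ (Proj.awayι_preimage_basicOpen grading.{u} (X_mem_grading_one i) one_pos
      (X_mem_grading_one k) one_pos)
    rw [← Proj.opensRange_awayι grading.{u} (.X k) (X_mem_grading_one k) one_pos]
    rfl
  rw [affinePoint, Scheme.Hom.comp_preimage, Scheme.Hom.comp_preimage, hchart]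
  refine (Scheme.toSpecΓ_preimage_basicOpen X _).trans ?_
  rw [← hk, Scheme.basicOpen_mul, Scheme.basicOpen_of_isUnit X h, inf_top_eq]
  rfl

theorem affinePoint_eq_affinePoint_iff_forall {i j : Fin 2} {v w : Fin 2 → Γ(X, ⊤)}
    (hv : IsUnit (v i)) (hw : IsUnit (w j)) :
    affinePoint i v hv = affinePoint j w hw ↔ ∀ k l, v k * w l = v l * w k := by
  refine ⟨fun h k l ↦ ?_, fun h ↦ ?_⟩
  · have hvj : IsUnit (v j) := isUnit_of_basicOpen_eq_top <| by
      rw [← affinePoint_preimage_opensRange_chart hv j, h, affinePoint_preimage_opensRange_chart hw,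
        Scheme.basicOpen_of_isUnit X hw]
    rw [affinePoint_congr hv hvj, affinePoint_eq_affinePoint_iff hvj hw] at h
    refine hvj.mul_left_cancel ?_
    linear_combination v k * h l - v l * h k
  · have hvj : IsUnit (v j) :=
      isUnit_of_mul_isUnit_left (y := w i) (h i j ▸ hv.mul hw)
    rw [affinePoint_congr hv hvj, affinePoint_eq_affinePoint_iff hvj hw]
    exact h j

theorem isUnit_appTop_ι_basicOpen (a : Γ(X, ⊤)) : IsUnit ((X.basicOpen a).ι.appTop.hom a) :=
  isUnit_of_basicOpen_eq_top <| by
    rw [← Scheme.preimage_basicOpen_top, Scheme.Opens.ι_preimage_self]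

/-- The sieve of morphisms along which one of the homogeneous coordinates becomes invertible. -/
def unitSieve (v : Fin 2 → Γ(X, ⊤)) : Sieve X where
  arrows _ g := ∃ i, IsUnit (g.appTop.hom (v i))
  downward_closed := by
    rintro Y Z g ⟨i, hi⟩ k
    exact ⟨i, hi.map k.appTop.hom⟩

theorem unitSieve_mem {v : Fin 2 → Γ(X, ⊤)} (hv : IsCoprime (v 0) (v 1)) :
    unitSieve v ∈ Scheme.fppfTopology X := by
  refine mem_fppfTopology_of_opens fun x ↦ ?_
  obtain ⟨i, hi⟩ : ∃ i, x ∈ X.basicOpen (v i) := by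
    obtain ⟨a, b, hab⟩ := hv.map (X.presheaf.Γgerm x).hom
    obtain h | h := IsLocalRing.isUnit_or_isUnit_of_isUnit_add (hab ▸ isUnit_one)
    exacts [⟨0, (Scheme.mem_basicOpen_top X _ x).2 (isUnit_of_mul_isUnit_right h)⟩,
      ⟨1, (Scheme.mem_basicOpen_top X _ x).2 (isUnit_of_mul_isUnit_right h)⟩]
  exact ⟨_, hi, i, isUnit_appTop_ι_basicOpen _⟩

theorem exists_point (v : Fin 2 → Γ(X, ⊤)) (hv : IsCoprime (v 0) (v 1)) :
    ∃ φ : X ⟶ P1Z, ∀ ⦃Y : Scheme.{u}⦄ (g : Y ⟶ X) i (hi : IsUnit (g.appTop.hom (v i))),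
      g ≫ φ = affinePoint i (g.appTop.hom ∘ v) hi := by
  obtain ⟨φ, hφ⟩ := exists_comp_eq_of_mem (unitSieve_mem hv)
    (fun Y g hg ↦ affinePoint hg.choose (g.appTop.hom ∘ v) hg.choose_spec) fun Y Z k g hg ↦ by
      rw [comp_affinePoint, affinePoint_eq_affinePoint_iff_forall]
      exact fun _ _ ↦ mul_comm _ _
  exact ⟨φ, fun Y g i hi ↦ (hφ g ⟨i, hi⟩).trans (affinePoint_congr _ _)⟩

/-- The morphism `[v₀ : v₁]` to the projective line given by coprime homogeneous coordinates. -/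
noncomputable def point (v : Fin 2 → Γ(X, ⊤)) (hv : IsCoprime (v 0) (v 1)) : X ⟶ P1Z :=
  (exists_point v hv).choose

theorem comp_point_eq_affinePoint {v : Fin 2 → Γ(X, ⊤)} (hv : IsCoprime (v 0) (v 1))
    (g : Y ⟶ X) {i : Fin 2} (hi : IsUnit (g.appTop.hom (v i))) :
    g ≫ point v hv = affinePoint i (g.appTop.hom ∘ v) hi :=
  (exists_point v hv).choose_spec g i hi

theorem point_eq_affinePoint {v : Fin 2 → Γ(X, ⊤)} (hv : IsCoprime (v 0) (v 1)) {i : Fin 2}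
    (hi : IsUnit (v i)) : point v hv = affinePoint i v hi := by
  simpa using comp_point_eq_affinePoint hv (𝟙 X) (i := i) (by simpa using hi)

theorem comp_point (g : Y ⟶ X) {v : Fin 2 → Γ(X, ⊤)} (hv : IsCoprime (v 0) (v 1)) :
    g ≫ point v hv = point (g.appTop.hom ∘ v) (hv.map g.appTop.hom) := by
  refine eq_of_comp_eq_of_mem (unitSieve_mem (v := g.appTop.hom ∘ v) (hv.map g.appTop.hom)) ?_
  rintro Z k ⟨i, hi⟩
  rw [comp_point_eq_affinePoint _ k hi, ← Category.assoc]
  exact comp_point_eq_affinePoint hv (k ≫ g) hi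

theorem eq_of_appTop_eq_of_mem {R : Sieve X} (hR : R ∈ Scheme.fppfTopology X) {a b : Γ(X, ⊤)}
    (h : ∀ ⦃Y : Scheme.{u}⦄ (g : Y ⟶ X), R g → g.appTop.hom a = g.appTop.hom b) : a = b := by
  have hone (c : Γ(X, ⊤)) : IsUnit (![1, c] 0) := isUnit_one
  have heq : affinePoint 0 _ (hone a) = affinePoint 0 _ (hone b) :=
    eq_of_comp_eq_of_mem hR fun Y g hg ↦ by
      rw [comp_affinePoint, comp_affinePoint, affinePoint_eq_affinePoint_iff]
      simp [h g hg]
  simpa using ((affinePoint_eq_affinePoint_iff _ _).1 heq 1).symm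

theorem point_eq_point_iff {v w : Fin 2 → Γ(X, ⊤)} (hv : IsCoprime (v 0) (v 1))
    (hw : IsCoprime (w 0) (w 1)) : point v hv = point w hw ↔ v 0 * w 1 = v 1 * w 0 := by
  have hR := GrothendieckTopology.intersection_covering _ (unitSieve_mem hv) (unitSieve_mem hw)
  refine ⟨fun h ↦ eq_of_appTop_eq_of_mem hR fun Z g ⟨⟨i, hi⟩, ⟨j, hj⟩⟩ ↦ ?_,
    fun h ↦ eq_of_comp_eq_of_mem hR fun Z g ⟨⟨i, hi⟩, ⟨j, hj⟩⟩ ↦ ?_⟩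
  · have hg := congr(g ≫ $h)
    rw [comp_point_eq_affinePoint hv g hi, comp_point_eq_affinePoint hw g hj,
      affinePoint_eq_affinePoint_iff_forall] at hg
    simpa using hg 0 1
  · rw [comp_point_eq_affinePoint hv g hi, comp_point_eq_affinePoint hw g hj,
      affinePoint_eq_affinePoint_iff_forall]
    have hg := congr(g.appTop.hom $h)
    rw [map_mul, map_mul] at hg
    intro k l
    fin_cases k <;> fin_cases l <;> first | rfl | exact hg | exact hg.symm

/-- The sieve of morphisms along which `φ` acquires homogeneous coordinates. -/
def coordSieve (φ : X ⟶ P1Z.{u}) : Sieve X where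
  arrows Y g := ∃ (v : Fin 2 → Γ(Y, ⊤)) (hv : IsCoprime (v 0) (v 1)), g ≫ φ = point v hv
  downward_closed := by
    rintro Y Z g ⟨v, hv, hg⟩ k
    exact ⟨_, hv.map k.appTop.hom, by rw [Category.assoc, hg, comp_point]⟩

section RatioCoord

variable {R A : Type*} [CommRing R] [CommRing A]

/-- The homogeneous coordinates of a point of the `i`-th chart: the `i`-th one is `1`, the other
one is `a`. -/
def ratioCoord (i : Fin 2) (a : R) : Fin 2 → R :=
  ![![1, a], ![a, 1]] i

theorem ratioCoord_self (i : Fin 2) (a : R) : ratioCoord i a i = 1 := by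
  fin_cases i <;> rfl

theorem comp_ratioCoord (g : R →+* A) (i : Fin 2) (a : R) :
    g ∘ ratioCoord i a = ratioCoord i (g a) := by
  ext k
  fin_cases i <;> fin_cases k <;> simp [ratioCoord]

theorem isCoprime_ratioCoord (i : Fin 2) (a : R) :
    IsCoprime (ratioCoord i a 0) (ratioCoord i a 1) := by
  fin_cases i
  exacts [isCoprime_one_left, isCoprime_one_right]

end RatioCoord

/-- The point with coordinate `a` of the `i`-th chart, i.e. `[1 : a]` for `i = 0` and `[a : 1]` for
`i = 1`. -/
noncomputable def ratio (i : Fin 2) (a : Γ(X, ⊤)) : X ⟶ P1Z :=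
  point (ratioCoord i a) (isCoprime_ratioCoord i a)

theorem comp_ratio (g : Y ⟶ X) (i : Fin 2) (a : Γ(X, ⊤)) :
    g ≫ ratio i a = ratio i (g.appTop.hom a) := by
  rw [ratio, ratio, comp_point]
  congr 1
  exact comp_ratioCoord _ _ _

theorem ratio_inj {i : Fin 2} {a b : Γ(X, ⊤)} : ratio i a = ratio i b ↔ a = b := by
  rw [ratio, ratio, point_eq_point_iff]
  fin_cases i <;> simp [ratioCoord, eq_comm]

theorem ratio_eq_ratio_iff {i j : Fin 2} (hij : i ≠ j) {a b : Γ(X, ⊤)} :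
    ratio i a = ratio j b ↔ a * b = 1 := by
  rw [ratio, ratio, point_eq_point_iff]
  fin_cases i <;> fin_cases j <;> simp_all [ratioCoord, eq_comm]

theorem exists_eq_ratio {i : Fin 2} {φ : X ⟶ P1Z} (h : ∀ x, φ x ∈ (chart.{u} i).opensRange) :
    ∃ a, φ = ratio i a := by
  obtain ⟨v, hi, rfl⟩ := exists_eq_affinePoint h
  obtain ⟨c, hc⟩ := hi.exists_left_inv
  have hone : IsUnit (ratioCoord i (c * v (1 - i)) i) := by rw [ratioCoord_self]; exact isUnit_one
  have hcoord (k : Fin 2) : ratioCoord i (c * v (1 - i)) k = c * v k := by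
    fin_cases i <;> fin_cases k
    exacts [hc.symm, rfl, rfl, hc.symm]
  refine ⟨c * v (1 - i), ?_⟩
  rw [ratio, point_eq_affinePoint _ hone, affinePoint_eq_affinePoint_iff]
  intro k
  rw [ratioCoord_self, hcoord]
  linear_combination v k * hc

theorem ratio_apply_mem (i : Fin 2) (a : Γ(X, ⊤)) (x : X) :
    ratio i a x ∈ (chart.{u} i).opensRange := by
  have hone : IsUnit (ratioCoord i a i) := by rw [ratioCoord_self]; exact isUnit_one
  change x ∈ ratio i a ⁻¹ᵁ (chart.{u} i).opensRange
  rw [ratio, point_eq_affinePoint _ hone, affinePoint_preimage_opensRange_chart,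
    Scheme.basicOpen_of_isUnit X hone]
  trivial

theorem exists_ratio_of_opens (φ : X ⟶ P1Z.{u}) (x : X) :
    ∃ U : X.Opens, x ∈ U ∧ ∃ i a, U.ι ≫ φ = ratio i a := by
  obtain ⟨i, hi⟩ := exists_mem_opensRange_chart (φ x)
  exact ⟨φ ⁻¹ᵁ (chart i).opensRange, hi, i, exists_eq_ratio fun y ↦ y.2⟩

theorem coordSieve_mem (φ : X ⟶ P1Z.{u}) : coordSieve φ ∈ Scheme.fppfTopology X :=
  mem_fppfTopology_of_opens fun x ↦
    have ⟨U, hxU, _, _, h⟩ := exists_ratio_of_opens φ x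
    ⟨U, hxU, _, _, h⟩

section Action

open Matrix

theorem isCoprime_mulVec {R : Type*} [CommRing R] (M : GL (Fin 2) R) {v : Fin 2 → R}
    (hv : IsCoprime (v 0) (v 1)) : IsCoprime ((M.1 *ᵥ v) 0) ((M.1 *ᵥ v) 1) := by
  obtain ⟨x, y, hxy⟩ := hv
  have hM : v = M⁻¹.1 *ᵥ (M.1 *ᵥ v) := by
    rw [mulVec_mulVec, ← Units.val_mul, inv_mul_cancel, Units.val_one, one_mulVec]
  refine ⟨(![x, y] ᵥ* M⁻¹.1) 0, (![x, y] ᵥ* M⁻¹.1) 1, ?_⟩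
  calc _ = (![x, y] ᵥ* M⁻¹.1) ⬝ᵥ (M.1 *ᵥ v) := (Fin.sum_univ_two _).symm
    _ = ![x, y] ⬝ᵥ v := by rw [← dotProduct_mulVec, ← hM]
    _ = 1 := (Fin.sum_univ_two _).trans hxy

theorem det_mulVec_mulVec {R : Type*} [CommRing R] (M : Matrix (Fin 2) (Fin 2) R)
    (v w : Fin 2 → R) : (M *ᵥ v) 0 * (M *ᵥ w) 1 - (M *ᵥ v) 1 * (M *ᵥ w) 0 =
      M.det * (v 0 * w 1 - v 1 * w 0) := by
  simp only [mulVec, dotProduct, Fin.sum_univ_two, det_fin_two]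
  ring

/-- The inverse image of an invertible matrix of functions. -/
noncomputable abbrev pullbackGL (g : Y ⟶ X) : GL (Fin 2) Γ(X, ⊤) →* GL (Fin 2) Γ(Y, ⊤) :=
  GeneralLinearGroup.map g.appTop.hom

theorem comp_mulVec (g : Y ⟶ X) (M : GL (Fin 2) Γ(X, ⊤)) (v : Fin 2 → Γ(X, ⊤)) :
    g.appTop.hom ∘ (M.1 *ᵥ v) = (pullbackGL g M).1 *ᵥ (g.appTop.hom ∘ v) :=
  funext fun i ↦ RingHom.map_mulVec _ _ _ i

theorem pullbackGL_id (M : GL (Fin 2) Γ(X, ⊤)) : pullbackGL (𝟙 X) M = M := by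
  rw [pullbackGL, Scheme.Hom.id_appTop, CommRingCat.hom_id, GeneralLinearGroup.map_id]
  rfl

theorem pullbackGL_comp {Z : Scheme.{u}} (k : Z ⟶ Y) (g : Y ⟶ X) (M : GL (Fin 2) Γ(X, ⊤)) :
    pullbackGL (k ≫ g) M = pullbackGL k (pullbackGL g M) := by
  rw [pullbackGL, Scheme.Hom.comp_appTop, CommRingCat.hom_comp]
  rfl

theorem point_mulVec_eq_point_mulVec (M : GL (Fin 2) Γ(X, ⊤)) {v w : Fin 2 → Γ(X, ⊤)}
    {hv : IsCoprime (v 0) (v 1)} {hw : IsCoprime (w 0) (w 1)} (h : point v hv = point w hw) :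
    point (M.1 *ᵥ v) (isCoprime_mulVec M hv) = point (M.1 *ᵥ w) (isCoprime_mulVec M hw) := by
  rw [point_eq_point_iff, ← sub_eq_zero] at h ⊢
  rw [det_mulVec_mulVec, h, mul_zero]

theorem exists_act (M : GL (Fin 2) Γ(X, ⊤)) (φ : X ⟶ P1Z.{u}) :
    ∃ ψ : X ⟶ P1Z.{u}, ∀ ⦃Y : Scheme.{u}⦄ (g : Y ⟶ X) (v : Fin 2 → Γ(Y, ⊤))
      (hv : IsCoprime (v 0) (v 1)), g ≫ φ = point v hv →
        g ≫ ψ = point ((pullbackGL g M).1 *ᵥ v) (isCoprime_mulVec _ hv) := by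
  choose v hv hφ using fun (Y : Scheme.{u}) (g : Y ⟶ X) (hg : coordSieve φ g) ↦ hg
  obtain ⟨ψ, hψ⟩ := exists_comp_eq_of_mem (coordSieve_mem φ)
    (fun Y g hg ↦ point ((pullbackGL g M).1 *ᵥ v Y g hg) (isCoprime_mulVec _ (hv Y g hg)))
    fun Y Z k g hg ↦ by
      simp only [comp_point, comp_mulVec, pullbackGL_comp]
      refine point_mulVec_eq_point_mulVec _ (hv := hv ..) (hw := (hv Y g hg).map k.appTop.hom) ?_
      rw [← hφ, Category.assoc, hφ Y g hg, comp_point]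
  refine ⟨ψ, fun Y g w hw h ↦ ?_⟩
  rw [hψ g ⟨w, hw, h⟩]
  exact point_mulVec_eq_point_mulVec _ ((hφ _ _ _).symm.trans h)

/-- The action of an invertible matrix of functions on a point of the projective line, given by
`v ↦ M v` in homogeneous coordinates. -/
noncomputable def act (M : GL (Fin 2) Γ(X, ⊤)) (φ : X ⟶ P1Z.{u}) : X ⟶ P1Z :=
  (exists_act M φ).choose

theorem comp_act_of_comp_eq_point (M : GL (Fin 2) Γ(X, ⊤)) {φ : X ⟶ P1Z.{u}} {g : Y ⟶ X}
    {v : Fin 2 → Γ(Y, ⊤)} {hv : IsCoprime (v 0) (v 1)} (h : g ≫ φ = point v hv) :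
    g ≫ act M φ = point ((pullbackGL g M).1 *ᵥ v) (isCoprime_mulVec _ hv) :=
  (exists_act M φ).choose_spec g v hv h

theorem comp_act (g : Y ⟶ X) (M : GL (Fin 2) Γ(X, ⊤)) (φ : X ⟶ P1Z.{u}) :
    g ≫ act M φ = act (pullbackGL g M) (g ≫ φ) := by
  refine eq_of_comp_eq_of_mem (coordSieve_mem (g ≫ φ)) ?_
  rintro Z k ⟨v, hv, h⟩
  rw [comp_act_of_comp_eq_point _ h, ← pullbackGL_comp, ← Category.assoc]
  exact comp_act_of_comp_eq_point M ((Category.assoc _ _ _).trans h)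

theorem act_point (M : GL (Fin 2) Γ(X, ⊤)) {v : Fin 2 → Γ(X, ⊤)} (hv : IsCoprime (v 0) (v 1)) :
    act M (point v hv) = point (M.1 *ᵥ v) (isCoprime_mulVec M hv) := by
  have h := comp_act_of_comp_eq_point M (φ := point v hv) (g := 𝟙 X) (Category.id_comp _)
  simpa [pullbackGL] using h

theorem act_act_of_mul_eq_one {M N : GL (Fin 2) Γ(X, ⊤)} (h : M * N = 1) (φ : X ⟶ P1Z.{u}) :
    act M (act N φ) = φ := by
  refine eq_of_comp_eq_of_mem (coordSieve_mem φ) ?_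
  rintro Z k ⟨v, hv, hk⟩
  simp only [comp_act, hk, act_point, mulVec_mulVec, ← Units.val_mul, ← map_mul, h, map_one,
    Units.val_one, one_mulVec]

end Action

end P1Z

/-! ### Trivializations of `ℙ¹`-bundles -/

section Disjoint

variable {X P : Scheme.{u}}

/-- Two morphisms are disjoint if they agree nowhere, i.e. if their equalizer is empty. -/
def AreDisjoint (s t : X ⟶ P) : Prop :=
  ∀ ⦃Z : Scheme.{u}⦄ (g : Z ⟶ X), g ≫ s = g ≫ t → IsEmpty Z

theorem AreDisjoint.comp {s t : X ⟶ P} (h : AreDisjoint s t) {Y : Scheme.{u}} (g : Y ⟶ X) :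
    AreDisjoint (g ≫ s) (g ≫ t) := fun Z k hk ↦
  h (k ≫ g) (by simpa only [Category.assoc] using hk)

theorem isUnit_of_forall_isEmpty {a : Γ(X, ⊤)}
    (h : ∀ ⦃Z : Scheme.{u}⦄ (g : Z ⟶ X), g.appTop.hom a = 0 → IsEmpty Z) : IsUnit a := by
  refine isUnit_of_basicOpen_eq_top (top_le_iff.1 fun x _ ↦ ?_)
  have hx : X.fromSpecResidueField x ⁻¹ᵁ X.basicOpen a = ⊤ := by
    rw [Scheme.preimage_basicOpen_top]
    refine Scheme.basicOpen_of_isUnit _ ?_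
    let e := (Scheme.ΓSpecIso (X.residueField x)).commRingCatIsoToRingEquiv
    refine (MulEquiv.isUnit_map e).1 (IsUnit.mk0 _ fun h0 ↦ ?_)
    exact (h _ ((map_eq_zero_iff e e.injective).1 h0)).false (IsLocalRing.closedPoint _)
  obtain ⟨z, hz⟩ : x ∈ Set.range (X.fromSpecResidueField x) := by
    rw [X.range_fromSpecResidueField x]
    rfl
  exact hz ▸ hx.ge (Set.mem_univ z)

theorem P1Z.exists_eq_ratio_of_areDisjoint {i j : Fin 2} (hij : i ≠ j) {φ : X ⟶ P1Z.{u}}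
    (h : AreDisjoint φ (ratio j 0)) : ∃ a, φ = ratio i a := by
  refine exists_eq_ratio fun x ↦ ?_
  obtain ⟨U, hxU, k, a, hU⟩ := exists_ratio_of_opens φ x
  suffices ∃ b, U.ι ≫ φ = ratio i b by
    obtain ⟨b, hb⟩ := this
    have hx := ratio_apply_mem i b ⟨x, hxU⟩
    rwa [← hb] at hx
  obtain rfl | hki := eq_or_ne k i
  · exact ⟨a, hU⟩
  · obtain rfl : k = j := by omega
    obtain ⟨b, hb⟩ : IsUnit a := isUnit_of_forall_isEmpty fun Z g hg ↦
      h (g ≫ U.ι) (by rw [Category.assoc, hU, comp_ratio, comp_ratio, hg, map_zero])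
    exact ⟨↑b⁻¹, hU.trans ((ratio_eq_ratio_iff hki).2 (by rw [← hb, Units.mul_inv]))⟩

end Disjoint

section Trivialization

open Matrix P1Z

variable {P S P' S' X : Scheme.{u}}

/-- A morphism `π : P ⟶ ℙ¹` trivializes `f : P ⟶ S` if `(f, π)` is an isomorphism `P ≅ ℙ¹_S`. -/
def IsTrivialization (f : P ⟶ S) (π : P ⟶ P1Z.{u}) : Prop :=
  IsPullback f π (terminal.from S) (terminal.from P1Z)

namespace IsTrivialization

variable {f : P ⟶ S} {π : P ⟶ P1Z.{u}}

theorem of_existsUnique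
    (h : ∀ ⦃X : Scheme.{u}⦄ (t : X ⟶ S) (φ : X ⟶ P1Z), ∃! l : X ⟶ P, l ≫ f = t ∧ l ≫ π = φ) :
    IsTrivialization f π := by
  choose l hl hl' using h
  exact ⟨⟨Subsingleton.elim _ _⟩, ⟨PullbackCone.IsLimit.mk _ (fun c ↦ l c.fst c.snd)
    (fun c ↦ (hl _ _).1) (fun c ↦ (hl _ _).2) fun c m h₁ h₂ ↦ hl' _ _ m ⟨h₁, h₂⟩⟩⟩

theorem existsUnique (hπ : IsTrivialization f π) (t : X ⟶ S) (φ : X ⟶ P1Z) :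
    ∃! l : X ⟶ P, l ≫ f = t ∧ l ≫ π = φ :=
  ⟨hπ.lift t φ (Subsingleton.elim _ _), ⟨hπ.lift_fst .., hπ.lift_snd ..⟩, fun l hl ↦
    hπ.hom_ext (by rw [hl.1, hπ.lift_fst]) (by rw [hl.2, hπ.lift_snd])⟩

theorem hom_ext (hπ : IsTrivialization f π) {a b : X ⟶ P} (hf : a ≫ f = b ≫ f)
    (h : a ≫ π = b ≫ π) : a = b :=
  IsPullback.hom_ext hπ hf h

theorem baseChange (hπ : IsTrivialization f π) {f' : P' ⟶ S'} {k' : P' ⟶ P} {k : S' ⟶ S}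
    (h : IsPullback k' f' f k) : IsTrivialization f' (k' ≫ π) := by
  have hpaste := (h.paste_horiz (IsPullback.flip hπ)).flip
  rwa [terminal.comp_from] at hpaste

theorem act (hπ : IsTrivialization f π) (M : GL (Fin 2) Γ(S, ⊤)) :
    IsTrivialization f (act (pullbackGL f M) π) := by
  have comp_act_eq {X : Scheme.{u}} {t : X ⟶ S} {l : X ⟶ P} (hl : l ≫ f = t) :
      l ≫ P1Z.act (pullbackGL f M) π = P1Z.act (pullbackGL t M) (l ≫ π) := by
    rw [comp_act, ← pullbackGL_comp, hl]
  refine .of_existsUnique fun X t φ ↦ ?_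
  obtain ⟨l, ⟨hlf, hlπ⟩, hl⟩ := hπ.existsUnique t (P1Z.act (pullbackGL t M⁻¹) φ)
  refine ⟨l, ⟨hlf, ?_⟩, fun m ⟨hmf, hmφ⟩ ↦ hl m ⟨hmf, ?_⟩⟩
  · rw [comp_act_eq hlf, hlπ, act_act_of_mul_eq_one (by rw [← map_mul, mul_inv_cancel, map_one])]
  · rw [← hmφ, comp_act_eq hmf,
      act_act_of_mul_eq_one (by rw [← map_mul, inv_mul_cancel, map_one])]

theorem isUnit_det (hπ : IsTrivialization f π) {s t : X ⟶ P} (hst : s ≫ f = t ≫ f)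
    (hdisj : AreDisjoint s t) {v w : Fin 2 → Γ(X, ⊤)} {hv : IsCoprime (v 0) (v 1)}
    {hw : IsCoprime (w 0) (w 1)} (hsv : s ≫ π = point v hv) (htw : t ≫ π = point w hw) :
    IsUnit (v 0 * w 1 - v 1 * w 0) :=
  isUnit_of_forall_isEmpty fun Z g hg ↦ hdisj g <| hπ.hom_ext (by simp [hst]) <| by
    rw [Category.assoc, Category.assoc, hsv, htw, comp_point, comp_point, point_eq_point_iff]
    simpa [sub_eq_zero] using hg

end IsTrivialization

theorem IsP1Bundle.exists_isTrivialization {f : P ⟶ S} (hf : IsP1Bundle f) (x : S) :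
    ∃ U : S.Opens, x ∈ U ∧ ∃ π, IsTrivialization (pullback.snd f U.ι) π := by
  obtain ⟨U, hxU, e, he⟩ := hf x
  refine ⟨U, hxU, e.hom ≫ pullback.snd _ _, (IsPullback.of_hasPullback _ _).of_iso e.symm
    (Iso.refl _) (Iso.refl _) (Iso.refl _) ?_ ?_ (by simp) (by simp)⟩
  · exact (Category.comp_id _).trans ((e.inv_hom_id_assoc _).symm.trans congr(e.inv ≫ $he))
  · exact (Category.comp_id _).trans (e.inv_hom_id_assoc _).symm

/-- A trivialization is standard with respect to three sections if it sends them to `0 = [1 : 0]`,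
`∞ = [0 : 1]` and `1 = [1 : 1]`. -/
structure IsStandard (f : P ⟶ S) (s : Fin 3 → (S ⟶ P)) (π : P ⟶ P1Z.{u}) : Prop where
  isTrivialization : IsTrivialization f π
  section_comp (i : Fin 3) : s i ≫ f = 𝟙 S
  comp_zero : s 0 ≫ π = ratio 0 0
  comp_one : s 1 ≫ π = ratio 1 0
  comp_two : s 2 ≫ π = ratio 0 1

theorem IsStandard.baseChange {f : P ⟶ S} {s : Fin 3 → (S ⟶ P)} {π : P ⟶ P1Z.{u}}
    (hπ : IsStandard f s π) {f' : P' ⟶ S'} {k' : P' ⟶ P} {k : S' ⟶ S} (h : IsPullback k' f' f k)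
    {s' : Fin 3 → (S' ⟶ P')} (hs' : ∀ i, s' i ≫ f' = 𝟙 S') (hk : ∀ i, s' i ≫ k' = k ≫ s i) :
    IsStandard f' s' (k' ≫ π) where
  isTrivialization := hπ.isTrivialization.baseChange h
  section_comp := hs'
  comp_zero := by rw [← Category.assoc, hk, Category.assoc, hπ.comp_zero, comp_ratio, map_zero]
  comp_one := by rw [← Category.assoc, hk, Category.assoc, hπ.comp_one, comp_ratio, map_zero]
  comp_two := by rw [← Category.assoc, hk, Category.assoc, hπ.comp_two, comp_ratio, map_one]

theorem exists_mulVec_eq_of_isUnit_det {R : Type*} [CommRing R] {v : Fin 3 → Fin 2 → R}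
    (hv : ∀ i j, i ≠ j → IsUnit (v i 0 * v j 1 - v i 1 * v j 0)) :
    ∃ M : GL (Fin 2) R, (M.1 *ᵥ v 0) 1 = 0 ∧ (M.1 *ᵥ v 1) 0 = 0 ∧
      (M.1 *ᵥ v 2) 0 = (M.1 *ᵥ v 2) 1 := by
  let det (i j : Fin 3) : R := v i 0 * v j 1 - v i 1 * v j 0
  -- the matrix of `w ↦ (det(v₀, v₂) det(w, v₁), det(v₂, v₁) det(v₀, w))`
  let A : Matrix (Fin 2) (Fin 2) R :=
    !![det 0 2 * v 1 1, -det 0 2 * v 1 0; -det 2 1 * v 0 1, det 2 1 * v 0 0]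
  have hA : IsUnit A.det := by
    convert ((hv 0 2 (by decide)).mul (hv 2 1 (by decide))).mul (hv 0 1 (by decide)) using 1
    simp only [A, det, det_fin_two_of]
    ring
  have hmul (w : Fin 2 → R) (k : Fin 2) : (A *ᵥ w) k = A k 0 * w 0 + A k 1 * w 1 := by
    rw [mulVec, dotProduct, Fin.sum_univ_two]
  refine ⟨GeneralLinearGroup.mk'' A hA, (hmul _ _).trans ?_, (hmul _ _).trans ?_,
    (hmul _ _).trans (.trans ?_ (hmul _ _).symm)⟩
  all_goals
    simp only [A, det, of_apply, cons_val_zero, cons_val_one]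
    ring

theorem IsTrivialization.exists_isStandard {f : P ⟶ S} {π : P ⟶ P1Z.{u}}
    (hπ : IsTrivialization f π) {s : Fin 3 → (S ⟶ P)} (hs : ∀ i, s i ≫ f = 𝟙 S)
    (hdisj : ∀ i j, i ≠ j → AreDisjoint (s i) (s j)) (hcoord : ∀ i, coordSieve (s i ≫ π) (𝟙 S)) :
    ∃ π', IsStandard f s π' := by
  choose v hv hsv using hcoord
  simp only [Category.id_comp] at hsv
  obtain ⟨M, hM₀, hM₁, hM₂⟩ := exists_mulVec_eq_of_isUnit_det (v := v) fun i j hij ↦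
    hπ.isUnit_det ((hs i).trans (hs j).symm) (hdisj i j hij) (hsv i) (hsv j)
  have hM (i : Fin 3) : s i ≫ P1Z.act (pullbackGL f M) π =
      point (M.1 *ᵥ v i) (isCoprime_mulVec M (hv i)) := by
    have hfM : pullbackGL (s i) (pullbackGL f M) = M := by
      rw [← pullbackGL_comp, hs, pullbackGL_id]
    rw [comp_act, hfM, hsv, act_point]
  refine ⟨_, hπ.act M, hs, ?_, ?_, ?_⟩ <;> rw [hM, ratio, point_eq_point_iff]
  · simp [ratioCoord, hM₀]
  · simp [ratioCoord, hM₁]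
  · simp [ratioCoord, hM₂]

end Trivialization

/-! ### Rigidity of standard trivializations -/

section Rigidity

open P1Z

section CoordChangePolynomial

open Polynomial LaurentPolynomial

variable {R : Type*} [CommRing R]

theorem trunc_invert_toLaurent (p : R[X]) :
    trunc (invert (toLaurent p)) = Polynomial.C (p.coeff 0) := by
  induction p using Polynomial.induction_on' with
  | add p q hp hq => simp only [map_add, hp, hq, coeff_add]
  | monomial n a =>
    rw [← Polynomial.C_mul_X_pow_eq_monomial, toLaurent_C_mul_X_pow, map_mul, invert_C, invert_T,
      trunc_C_mul_T]
    obtain rfl | hn := eq_or_ne n 0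
    · simp
    · rw [if_neg (by omega), coeff_C_mul_X_pow, if_neg hn.symm, Polynomial.C_0]

theorem eval₂_C_T_one (p : R[X]) : p.eval₂ LaurentPolynomial.C (T 1) = toLaurent p := by
  suffices eval₂RingHom LaurentPolynomial.C (T 1) = toLaurent from congr($this p)
  ext <;> simp

theorem eval₂_C_T_neg_one (p : R[X]) :
    p.eval₂ LaurentPolynomial.C (T (-1)) = invert (toLaurent p) := by
  suffices eval₂RingHom LaurentPolynomial.C (T (-1)) = RingHom.comp (invert (R := R)) toLaurent
    from congr($this p)
  ext <;> simp

theorem eval₂_comp_ringEquiv {A B : Type*} [CommRing A] [CommRing B] (e : B ≃+* A) (ρ : R →+* B)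
    (p : R[X]) (b : B) : p.eval₂ (e.toRingHom.comp ρ) (e b) = e (p.eval₂ ρ b) :=
  (hom_eval₂ p ρ e.toRingHom b).symm

theorem eq_X_of_toLaurent_mul_invert_eq_one {q r : R[X]} (hXq : X ∣ q) (hqX : q ∣ X) (hXr : X ∣ r)
    (hq : q.eval 1 = 1) (hqr : toLaurent q * invert (toLaurent r) = 1) : q = X := by
  obtain ⟨u, rfl⟩ := hXq
  obtain ⟨c, hc⟩ := hqX
  obtain ⟨w, rfl⟩ := hXr
  have huc : u * c = 1 := isRegular_X.left (by simpa only [mul_assoc, mul_one] using hc.symm)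
  have huw : toLaurent u * invert (toLaurent w) = 1 := by
    rw [map_mul, map_mul, map_mul, toLaurent_X, invert_T, mul_mul_mul_comm, ← T_add] at hqr
    simpa using hqr
  have hcw : toLaurent c = invert (toLaurent w) := by
    refine left_inv_eq_right_inv ?_ huw
    rw [← map_mul, mul_comm, huc, map_one]
  -- `c` is a polynomial in `T` and also one in `T⁻¹`
  have hc₀ : c = Polynomial.C (w.coeff 0) := by
    rw [← trunc_invert_toLaurent, ← hcw, trunc_toLaurent]
  have hw₀ : w.coeff 0 = 1 := by
    have := congrArg (eval 1) hc
    simpa [hc₀, hq] using this.symm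
  rw [hc₀, hw₀, Polynomial.C_1, mul_one] at hc
  exact hc.symm

end CoordChangePolynomial

theorem exists_appTop_eq {X Y : Scheme.{u}} [IsAffine X] (ρ : Γ(X, ⊤) →+* Γ(Y, ⊤)) :
    ∃ g : Y ⟶ X, g.appTop.hom = ρ := by
  refine ⟨Y.toSpecΓ ≫ Spec.map (CommRingCat.ofHom ρ) ≫ X.isoSpec.inv, ?_⟩
  refine congr(CommRingCat.Hom.hom $(toSpecΓ_comp_SpecMap_injective (a₂ := CommRingCat.ofHom ρ) ?_))
  change Y.toSpecΓ ≫ _ = Y.toSpecΓ ≫ _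
  rw [← Scheme.toSpecΓ_naturality, Category.assoc, Category.assoc, Scheme.isoSpec_inv_toSpecΓ]
  exact congr(Y.toSpecΓ ≫ $(Category.comp_id _))

namespace IsTrivialization

variable {P S : Scheme.{u}} {f : P ⟶ S} {π : P ⟶ P1Z.{u}}

theorem exists_comp_eq_ratio [IsAffine S] (hπ : IsTrivialization f π) {B : Type u} [CommRing B]
    (ρ : Γ(S, ⊤) →+* B) (i : Fin 2) (b : B) :
    ∃ (Y : Scheme.{u}) (_ : IsAffine Y) (e : B ≃+* Γ(Y, ⊤)) (l : Y ⟶ P),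
      (l ≫ f).appTop.hom = e.toRingHom.comp ρ ∧ l ≫ π = ratio i (e b) := by
  let e : B ≃+* Γ(Spec (.of B), ⊤) := (Scheme.ΓSpecIso (.of B)).symm.commRingCatIsoToRingEquiv
  obtain ⟨t, ht⟩ := exists_appTop_eq (e.toRingHom.comp ρ)
  obtain ⟨l, ⟨hlf, hlπ⟩, -⟩ := hπ.existsUnique t (ratio i (e b))
  exact ⟨_, inferInstance, e, l, by rw [hlf, ht], hlπ⟩

end IsTrivialization

section CoordChange

open Polynomial LaurentPolynomial

variable {P S : Scheme.{u}} {f : P ⟶ S} {s : Fin 3 → (S ⟶ P)} {π π' : P ⟶ P1Z.{u}}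

/-- The polynomial `q` expresses the `i`-th affine coordinate of `π'` through that of `π`, on the
whole of the `i`-th chart of `π`. -/
def IsCoordChange (f : P ⟶ S) (π π' : P ⟶ P1Z.{u}) (i : Fin 2) (q : Γ(S, ⊤)[X]) : Prop :=
  ∀ ⦃Y : Scheme.{u}⦄ (g : Y ⟶ P) (a : Γ(Y, ⊤)),
    g ≫ π = ratio i a → g ≫ π' = ratio i (q.eval₂ (g ≫ f).appTop.hom a)

namespace IsStandard

theorem comp_castSucc (hπ : IsStandard f s π) (j : Fin 2) : s j.castSucc ≫ π = ratio j 0 := by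
  fin_cases j
  exacts [hπ.comp_zero, hπ.comp_one]

theorem comp_eq_ratio_zero (hπ : IsStandard f s π) (hπ' : IsStandard f s π') {Y : Scheme.{u}}
    {g : Y ⟶ P} {j : Fin 2} (h : g ≫ π = ratio j 0) : g ≫ π' = ratio j 0 := by
  have hg : g = (g ≫ f) ≫ s j.castSucc := hπ.isTrivialization.hom_ext
    (by rw [Category.assoc, hπ.section_comp, Category.comp_id])
    (by rw [h, Category.assoc, hπ.comp_castSucc, comp_ratio, map_zero])
  rw [hg, Category.assoc, hπ'.comp_castSucc, comp_ratio, map_zero]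

theorem comp_two_eq_ratio (hπ : IsStandard f s π) (i : Fin 2) : s 2 ≫ π = ratio i 1 := by
  fin_cases i
  exacts [hπ.comp_two, hπ.comp_two.trans ((ratio_eq_ratio_iff (by decide)).2 (mul_one 1))]

theorem exists_isCoordChange [IsAffine S] (hπ : IsStandard f s π) (hπ' : IsStandard f s π')
    (i : Fin 2) : ∃ q : Γ(S, ⊤)[X], IsCoordChange f π π' i q := by
  obtain ⟨A, _, e, l, hlf, hlπ⟩ := hπ.isTrivialization.exists_comp_eq_ratio Polynomial.C i X
  obtain ⟨j, hji⟩ := exists_ne i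
  have hdisj : AreDisjoint (l ≫ π') (ratio j 0) := fun Z g hg ↦ by
    rw [comp_ratio, map_zero, ← Category.assoc] at hg
    have h := hπ'.comp_eq_ratio_zero hπ hg
    rw [Category.assoc, hlπ, comp_ratio, ratio_eq_ratio_iff hji.symm, mul_zero] at h
    by_contra hZ
    obtain ⟨z⟩ := not_isEmpty_iff.1 hZ
    have : Nonempty (⊤ : Z.Opens) := ⟨⟨z, trivial⟩⟩
    exact zero_ne_one h
  obtain ⟨b, hb⟩ := exists_eq_ratio_of_areDisjoint hji.symm hdisj
  refine ⟨e.symm b, fun Y g a hg ↦ ?_⟩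
  obtain ⟨k, hk⟩ := exists_appTop_eq ((eval₂RingHom (g ≫ f).appTop.hom a).comp e.symm.toRingHom)
  have hkl : k ≫ l = g := by
    refine hπ.isTrivialization.hom_ext ?_ ?_
    · rw [Category.assoc]
      refine ext_of_isAffine (CommRingCat.hom_ext ?_)
      rw [Scheme.Hom.comp_appTop, CommRingCat.hom_comp, hk, hlf]
      ext r
      simp
    · rw [Category.assoc, hlπ, comp_ratio, hk, hg]
      simp
  rw [← hkl, Category.assoc, hb, comp_ratio, hk, hkl]
  rfl

end IsStandard

namespace IsCoordChange

variable {i : Fin 2} {q : Γ(S, ⊤)[X]}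

theorem eval_eq (hq : IsCoordChange f π π' i q) {t : S ⟶ P} (ht : t ≫ f = 𝟙 S) {a b : Γ(S, ⊤)}
    (h : t ≫ π = ratio i a) (h' : t ≫ π' = ratio i b) : q.eval a = b := by
  have hqa := hq t a h
  rwa [h', ratio_inj, ht, Scheme.Hom.id_appTop, CommRingCat.hom_id, eval₂_id, eq_comm] at hqa

theorem X_dvd (hq : IsCoordChange f π π' i q) (hπ : IsStandard f s π) (hπ' : IsStandard f s π') :
    X ∣ q := X_dvd_iff.2 <| by
  rw [coeff_zero_eq_eval_zero]
  exact hq.eval_eq (hπ.section_comp _) (hπ.comp_castSucc i) (hπ'.comp_castSucc i)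

theorem eval_one (hq : IsCoordChange f π π' i q) (hπ : IsStandard f s π)
    (hπ' : IsStandard f s π') : q.eval 1 = 1 :=
  hq.eval_eq (hπ.section_comp 2) (hπ.comp_two_eq_ratio i) (hπ'.comp_two_eq_ratio i)

theorem dvd_X [IsAffine S] (hq : IsCoordChange f π π' i q) (hπ : IsStandard f s π)
    (hπ' : IsStandard f s π') : q ∣ X := by
  let ρ := Ideal.Quotient.mk (Ideal.span {q})
  obtain ⟨A, _, e, l, hlf, hlπ⟩ :=
    hπ.isTrivialization.exists_comp_eq_ratio (ρ.comp Polynomial.C) i (ρ X)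
  have hρq : q.eval₂ (ρ.comp Polynomial.C) (ρ X) = 0 := by
    rw [← hom_eval₂, eval₂_C_X, Ideal.Quotient.eq_zero_iff_mem, Ideal.mem_span_singleton]
  have hX : l ≫ π = ratio i 0 := hπ'.comp_eq_ratio_zero hπ <| by
    rw [hq l _ hlπ, hlf, eval₂_comp_ringEquiv, hρq, map_zero]
  rw [hlπ, ratio_inj, EmbeddingLike.map_eq_zero_iff] at hX
  rwa [← Ideal.mem_span_singleton, ← Ideal.Quotient.eq_zero_iff_mem]

theorem toLaurent_mul_invert [IsAffine S] (hq : IsCoordChange f π π' i q)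
    (hπ : IsTrivialization f π) {j : Fin 2} (hij : i ≠ j) {r : Γ(S, ⊤)[X]}
    (hr : IsCoordChange f π π' j r) : toLaurent q * invert (toLaurent r) = 1 := by
  obtain ⟨A, _, e, l, hlf, hlπ⟩ :=
    hπ.exists_comp_eq_ratio LaurentPolynomial.C i (T 1 : Γ(S, ⊤)[T;T⁻¹])
  have hlπj : l ≫ π = ratio j (e (T (-1))) := by
    rw [hlπ, ratio_eq_ratio_iff hij, ← map_mul, ← T_add, add_neg_cancel, T_zero, map_one]
  have hπ' := (hq l _ hlπ).symm.trans (hr l _ hlπj)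
  rwa [ratio_eq_ratio_iff hij, hlf, eval₂_comp_ringEquiv, eval₂_comp_ringEquiv, ← map_mul,
    EmbeddingLike.map_eq_one_iff, eval₂_C_T_one, eval₂_C_T_neg_one] at hπ'

end IsCoordChange

namespace IsStandard

theorem eq_of_isAffine [IsAffine S] (hπ : IsStandard f s π) (hπ' : IsStandard f s π') :
    π = π' := by
  choose q hq using hπ.exists_isCoordChange hπ'
  have hqX (i : Fin 2) : q i = X := by
    obtain ⟨j, hji⟩ := exists_ne i
    exact eq_X_of_toLaurent_mul_invert_eq_one ((hq i).X_dvd hπ hπ') ((hq i).dvd_X hπ hπ')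
      ((hq j).X_dvd hπ hπ') ((hq i).eval_one hπ hπ')
      ((hq i).toLaurent_mul_invert hπ.isTrivialization hji.symm (hq j))
  refine Scheme.hom_ext_of_forall _ _ fun x ↦ ?_
  obtain ⟨U, hxU, i, a, ha⟩ := exists_ratio_of_opens π x
  exact ⟨U, hxU, by rw [ha, hq i _ _ ha, hqX, eval₂_X]⟩

theorem eq (hπ : IsStandard f s π) (hπ' : IsStandard f s π') : π = π' := by
  refine Scheme.hom_ext_of_forall _ _ fun x ↦ ?_
  obtain ⟨U, hU, hxU, -⟩ := exists_isAffineOpen_mem_and_subset (U := ⊤) (x := f x) trivial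
  have : IsAffine U := hU
  have hf := (isPullback_morphismRestrict f U).flip
  let s' (i : Fin 3) : U.toScheme ⟶ (f ⁻¹ᵁ U).toScheme := hf.lift (U.ι ≫ s i) (𝟙 _) (by
    rw [Category.assoc, hπ.section_comp, Category.comp_id, Category.id_comp])
  have hs' (i : Fin 3) : s' i ≫ f ∣_ U = 𝟙 _ := hf.lift_snd _ _ _
  have hs (i : Fin 3) : s' i ≫ (f ⁻¹ᵁ U).ι = U.ι ≫ s i := hf.lift_fst _ _ _
  exact ⟨f ⁻¹ᵁ U, hxU, (hπ.baseChange hf hs' hs).eq_of_isAffine (hπ'.baseChange hf hs' hs)⟩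

end IsStandard

end CoordChange

end Rigidity

/-! ### Splitting étale covers -/

section EtaleCover

variable {D S T Y : Scheme.{u}}

theorem exists_isClopen_agreement {d : D ⟶ S} [FormallyUnramified d] [LocallyOfFiniteType d]
    [IsSeparated d] {a b : Y ⟶ D} (hab : a ≫ d = b ≫ d) :
    ∃ U : Y.Opens, IsClosed (U : Set Y) ∧
      ∀ ⦃Z : Scheme.{u}⦄ (g : Z ⟶ Y), g ≫ a = g ≫ b ↔ ∀ z, g z ∈ U := by
  let l : Y ⟶ pullback d d := pullback.lift a b hab
  have hla : l ≫ pullback.fst d d = a := pullback.lift_fst ..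
  have hlb : l ≫ pullback.snd d d = b := pullback.lift_snd ..
  let p := pullback.snd (pullback.diagonal d) l
  have hp : p ≫ a = p ≫ b := by
    have hl : pullback.fst _ _ ≫ pullback.diagonal d = p ≫ l := pullback.condition
    rw [← hla, ← hlb, ← reassoc_of% hl, ← reassoc_of% hl, pullback.diagonal_fst,
      pullback.diagonal_snd]
  refine ⟨p.opensRange, p.isClosedEmbedding.isClosed_range, fun Z g ↦ ⟨fun hg z ↦ ?_, fun hg ↦ ?_⟩⟩
  · have hgl : (g ≫ a) ≫ pullback.diagonal d = g ≫ l := by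
      apply pullback.hom_ext <;> simp [hla, hlb, hg]
    exact ⟨pullback.lift _ g hgl z, congr($(pullback.lift_snd _ g hgl) z)⟩
  · have hrange : Set.range g ⊆ Set.range p := Set.range_subset_iff.2 hg
    rw [← IsOpenImmersion.lift_fac p g hrange, Category.assoc, Category.assoc, hp]

theorem exists_geometricPoint (x : S) :
    ∃ (K : Type u) (_ : Field K) (_ : IsAlgClosed K) (t : Spec (.of K) ⟶ S), ∀ z, t z = x := by
  let K := AlgebraicClosure (S.residueField x)
  refine ⟨K, inferInstance, inferInstance,
    Spec.map (CommRingCat.ofHom (algebraMap (S.residueField x) K)) ≫ S.fromSpecResidueField x,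
    fun z ↦ ?_⟩
  rw [Scheme.Hom.comp_apply, Scheme.fromSpecResidueField_apply]

theorem IsEtaleCoverOfDegree.nonempty_equiv_lifts {n : ℕ} {d : D ⟶ S}
    (hd : IsEtaleCoverOfDegree n d) {K : Type u} [Field K] [IsAlgClosed K]
    (x : Spec (.of K) ⟶ S) : Nonempty (Fin n ≃ {τ : Spec (.of K) ⟶ D // τ ≫ d = x}) := by
  have := hd.1
  have : IsLocallyArtinian (pullback d x : Scheme.{u}) :=
    .of_locallyQuasiFinite (pullback.snd d x)
  have : CompactSpace (pullback d x : Scheme.{u}) :=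
    QuasiCompact.compactSpace_of_compactSpace (pullback.snd d x)
  have : Finite (pullback d x : Scheme.{u}) := finite_of_compact_of_discrete
  let fibre : {τ : Spec (.of K) ⟶ D // τ ≫ d = x} ≃
      {t : Spec (.of K) ⟶ pullback d x // t ≫ pullback.snd d x = 𝟙 _} :=
    { toFun τ := ⟨pullback.lift τ.1 (𝟙 _) (by rw [τ.2, Category.id_comp]), pullback.lift_snd ..⟩
      invFun t := ⟨t.1 ≫ pullback.fst _ _, by
        rw [Category.assoc, pullback.condition, reassoc_of% t.2]⟩
      left_inv τ := Subtype.ext (pullback.lift_fst ..)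
      right_inv t := Subtype.ext <| pullback.hom_ext (pullback.lift_fst ..)
        ((pullback.lift_snd ..).trans t.2.symm) }
  exact ⟨(Finite.equivFinOfCardEq (hd.2.2.2 K x)).symm.trans <| Equiv.symm <| fibre.trans <|
    (pointEquivClosedPoint (pullback.snd d x)).trans <|
    Equiv.subtypeUnivEquiv fun y ↦ mem_closedPoints_iff.2 (isClosed_discrete _)⟩

theorem exists_etale_lift {n : ℕ} {d : D ⟶ S} [Etale d] {x : Y ⟶ S} {τ : Fin n → (Y ⟶ D)}
    (hτ : ∀ i, τ i ≫ d = x) :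
    ∃ (T : Scheme.{u}) (g : T ⟶ S) (y : Y ⟶ T) (σ : Fin n → (T ⟶ D)), Etale g ∧ y ≫ g = x ∧
      (∀ i, σ i ≫ d = g) ∧ ∀ i, y ≫ σ i = τ i := by
  induction n with
  | zero => exact ⟨S, 𝟙 S, x, Fin.elim0, inferInstance, Category.comp_id x, nofun, nofun⟩
  | succ n ih =>
    obtain ⟨T, g, y, σ, _, hyg, hσ, hyσ⟩ := ih fun i ↦ hτ (Fin.castSucc i)
    let y' := pullback.lift y (τ (Fin.last n)) (hyg.trans (hτ _).symm)
    have hy' : y' ≫ pullback.fst g d = y := pullback.lift_fst ..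
    refine ⟨pullback g d, pullback.fst g d ≫ g, y',
      Fin.snoc (fun i ↦ pullback.fst g d ≫ σ i) (pullback.snd g d), inferInstance, ?_, ?_, ?_⟩
    · rw [reassoc_of% hy', hyg]
    · refine Fin.lastCases ?_ fun i ↦ ?_
      · simp [pullback.condition]
      · simp [hσ]
    · refine Fin.lastCases ?_ fun i ↦ ?_
      · simpa using pullback.lift_snd ..
      · simp [reassoc_of% hy', hyσ]

/-- A family `σ` of pairwise disjoint lifts of `g` along `d`. When `d` is an étale cover of the same
degree, this splits its base change along `g` into copies of the base. -/
structure IsDisjointLift {n : ℕ} (d : D ⟶ S) (g : T ⟶ S) (σ : Fin n → (T ⟶ D)) : Prop where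
  comp_eq (i : Fin n) : σ i ≫ d = g
  areDisjoint ⦃i j : Fin n⦄ (hij : i ≠ j) : AreDisjoint (σ i) (σ j)

theorem IsDisjointLift.comp {n : ℕ} {d : D ⟶ S} {g : T ⟶ S} {σ : Fin n → (T ⟶ D)}
    (h : IsDisjointLift d g σ) (k : Y ⟶ T) : IsDisjointLift d (k ≫ g) (fun i ↦ k ≫ σ i) where
  comp_eq i := by rw [Category.assoc, h.comp_eq]
  areDisjoint _ _ hij := (h.areDisjoint hij).comp k

namespace IsEtaleCoverOfDegree

variable {n : ℕ} {d : D ⟶ S}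

theorem exists_isDisjointLift (hd : IsEtaleCoverOfDegree n d) (s : S) :
    ∃ (T : Scheme.{u}) (g : T ⟶ S), Etale g ∧ s ∈ Set.range g ∧
      ∃ σ : Fin n → (T ⟶ D), IsDisjointLift d g σ := by
  have := hd.1
  have : Etale d := hd.2.1
  obtain ⟨K, _, _, x, hx⟩ := exists_geometricPoint s
  obtain ⟨τ⟩ := hd.nonempty_equiv_lifts x
  obtain ⟨T, g, y, σ, _, hyg, hσ, hyσ⟩ := exists_etale_lift fun i ↦ (τ i).2
  choose U hU hUσ using fun i j ↦ exists_isClopen_agreement ((hσ i).trans (hσ j).symm)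
  have hopen : IsOpen {z | ∀ i j, i ≠ j → z ∉ U i j} := by
    simp only [Set.ofPred_forall]
    exact isOpen_iInter_of_finite fun i ↦ isOpen_iInter_of_finite fun j ↦
      isOpen_iInter_of_finite fun _ ↦ (hU i j).isOpen_compl
  let W : T.Opens := ⟨_, hopen⟩
  let z : Spec (.of K) := IsLocalRing.closedPoint K
  have hyW : y z ∈ W := fun i j hij hyU ↦ by
    have hyij : y ≫ σ i = y ≫ σ j := (hUσ i j y).2 fun z' ↦ Subsingleton.elim z z' ▸ hyU
    rw [hyσ, hyσ] at hyij
    exact hij (τ.injective (Subtype.ext hyij))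
  refine ⟨W, W.ι ≫ g, inferInstance, ⟨⟨y z, hyW⟩, ?_⟩, fun i ↦ W.ι ≫ σ i, ?_, ?_⟩
  · rw [← hx z, ← hyg]
    rfl
  · exact fun i ↦ by rw [Category.assoc, hσ]
  · refine fun i j hij Z k hk ↦ ⟨fun w ↦ (k w).2 i j hij ?_⟩
    exact (hUσ i j (k ≫ W.ι)).1 (by simpa only [Category.assoc] using hk) w

theorem exists_opens_comp_eq (hd : IsEtaleCoverOfDegree n d) {g : T ⟶ S} {σ : Fin n → (T ⟶ D)}
    (hσ : IsDisjointLift d g σ) {a : Y ⟶ D} {t : Y ⟶ T} (hat : a ≫ d = t ≫ g) (y : Y) :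
    ∃ U : Y.Opens, y ∈ U ∧ ∃ i, U.ι ≫ a = U.ι ≫ t ≫ σ i := by
  have := hd.1
  have : Etale d := hd.2.1
  obtain ⟨K, _, _, x, hx⟩ := exists_geometricPoint y
  obtain ⟨e⟩ := hd.nonempty_equiv_lifts (x ≫ t ≫ g)
  have comp_eq (i : Fin n) : (t ≫ σ i) ≫ d = t ≫ g := by rw [Category.assoc, hσ.comp_eq]
  let τ (i : Fin n) : {τ : Spec (.of K) ⟶ D // τ ≫ d = x ≫ t ≫ g} :=
    ⟨x ≫ t ≫ σ i, by rw [Category.assoc, comp_eq]⟩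
  have hτ : Function.Injective τ := fun i j hij ↦ by
    by_contra hne
    exact (hσ.areDisjoint hne (x ≫ t) (by simpa [τ] using hij)).false (IsLocalRing.closedPoint K)
  obtain ⟨i, hi⟩ := (Finite.injective_iff_surjective_of_equiv e).1 hτ
    ⟨x ≫ a, by rw [Category.assoc, hat]⟩
  obtain ⟨U, -, hU⟩ := exists_isClopen_agreement (hat.trans (comp_eq i).symm)
  refine ⟨U, ?_, i, (hU U.ι).2 fun z ↦ z.2⟩
  rw [← hx (IsLocalRing.closedPoint K)]
  exact (hU x).1 congr($(hi).1).symm _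

end IsEtaleCoverOfDegree

end EtaleCover

/-! ### Marked isomorphisms between standardized bundles -/

section MarkedIso

variable {S T T' P P' D : Scheme.{u}} {f : P ⟶ S} {f' : P' ⟶ S} {j : D ⟶ P} {j' : D ⟶ P'}
  {g : T ⟶ S}

namespace IsDisjointLift

theorem of_comp {n : ℕ} {σ : Fin n → (T ⟶ D)} (h : IsDisjointLift f g fun i ↦ σ i ≫ j) :
    IsDisjointLift (j ≫ f) g σ where
  comp_eq i := by rw [← Category.assoc, h.comp_eq]
  areDisjoint _ _ hij _ k hk := h.areDisjoint hij k (by simp only [reassoc_of% hk])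

theorem comp_mono {n : ℕ} {σ : Fin n → (T ⟶ D)} [Mono j] (h : IsDisjointLift (j ≫ f) g σ) :
    IsDisjointLift f g fun i ↦ σ i ≫ j where
  comp_eq i := by rw [Category.assoc, h.comp_eq]
  areDisjoint _ _ hij _ k hk :=
    h.areDisjoint hij k (by simpa only [← Category.assoc, cancel_mono] using hk)

variable {n : ℕ} {s : Fin n → (T ⟶ P)} (h : IsDisjointLift f g s)

include h in
theorem comp_eq_id_comp (i : Fin n) : s i ≫ f = 𝟙 T ≫ g := by rw [h.comp_eq, Category.id_comp]

/-- The section of the base change of `P` along `g` given by a lift of `g` to `P`. -/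
noncomputable def baseChangeSection (i : Fin n) : T ⟶ pullback f g :=
  pullback.lift (s i) (𝟙 T) (h.comp_eq_id_comp i)

@[simp]
theorem baseChangeSection_fst (i : Fin n) : h.baseChangeSection i ≫ pullback.fst f g = s i :=
  pullback.lift_fst ..

@[simp]
theorem baseChangeSection_snd (i : Fin n) : h.baseChangeSection i ≫ pullback.snd f g = 𝟙 T :=
  pullback.lift_snd ..

end IsDisjointLift

namespace IsStandard

variable {s : Fin 3 → (S ⟶ P)} {s' : Fin 3 → (S ⟶ P')} {π : P ⟶ P1Z.{u}} {π' : P' ⟶ P1Z.{u}}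

theorem comp_eq_comp (hπ : IsStandard f s π) (hπ' : IsStandard f' s' π') (i : Fin 3) :
    s i ≫ π = s' i ≫ π' := by
  fin_cases i
  exacts [hπ.comp_zero.trans hπ'.comp_zero.symm, hπ.comp_one.trans hπ'.comp_one.symm,
    hπ.comp_two.trans hπ'.comp_two.symm]

theorem existsUnique_isIso (hπ : IsStandard f s π) (hπ' : IsStandard f' s' π') :
    ∃! e : P ⟶ P', IsIso e ∧ e ≫ f' = f ∧ ∀ i, s i ≫ e = s' i := by
  let e := hπ.isTrivialization.isoIsPullback _ _ hπ'.isTrivialization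
  have he : e.hom ≫ f' = f := IsPullback.isoIsPullback_hom_fst ..
  have heπ : e.hom ≫ π' = π := IsPullback.isoIsPullback_hom_snd ..
  have section_comp_e (i : Fin 3) : s i ≫ e.hom = s' i :=
    hπ'.isTrivialization.hom_ext (by rw [Category.assoc, he, hπ.section_comp, hπ'.section_comp])
      (by rw [Category.assoc, heπ, hπ.comp_eq_comp hπ'])
  refine ⟨e.hom, ⟨inferInstance, he, section_comp_e⟩, fun l ⟨_, hl, hs⟩ ↦ ?_⟩
  have hlπ : IsStandard f s (l ≫ π') := hπ'.baseChange
    (IsPullback.of_horiz_isIso ⟨by rw [hl, Category.comp_id]⟩) hπ.section_comp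
    (fun i ↦ by rw [hs, Category.id_comp])
  exact hπ'.isTrivialization.hom_ext (hl.trans he.symm) ((hlπ.eq hπ).trans heπ.symm)

end IsStandard

theorem isMarkedIsoOver_comp_fst {n : ℕ} {σ : Fin n → (T ⟶ D)}
    (hσ : IsDisjointLift f g fun i ↦ σ i ≫ j) (hσ' : IsDisjointLift f' g fun i ↦ σ i ≫ j')
    (hd : IsEtaleCoverOfDegree n (j ≫ f))
    {e : pullback f g ⟶ pullback f' g} [IsIso e] (he : e ≫ pullback.snd f' g = pullback.snd f g)
    (hes : ∀ i, hσ.baseChangeSection i ≫ e = hσ'.baseChangeSection i) :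
    IsMarkedIsoOver f f' j j' g (e ≫ pullback.fst f' g) where
  isPullback := (IsPullback.of_hasPullback f' g).of_iso (asIso e).symm (Iso.refl _) (Iso.refl _)
    (Iso.refl _) (by simp) (by simp [← he]) (by simp) (by simp)
  lift_comp Z d t h := by
    refine Scheme.hom_ext_of_forall _ _ fun z ↦ ?_
    obtain ⟨U, hzU, i, hU⟩ := hd.exists_opens_comp_eq hσ.of_comp (a := d) (t := t)
      (by rw [← Category.assoc, h]) z
    have lift_eq : U.ι ≫ pullback.lift (d ≫ j) t h = (U.ι ≫ t) ≫ hσ.baseChangeSection i := by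
      apply pullback.hom_ext <;> simp [reassoc_of% hU, pullback.lift_fst, pullback.lift_snd]
    refine ⟨U, hzU, ?_⟩
    rw [reassoc_of% lift_eq, reassoc_of% hes, hσ'.baseChangeSection_fst, reassoc_of% hU]

/-- The lifts `s` of `g` are standardizable if they are pairwise disjoint and the base change of `f`
along `g` has a trivialization which is standard with respect to the sections they define. -/
def IsStandardizable (f : P ⟶ S) (g : T ⟶ S) (s : Fin 3 → (T ⟶ P)) : Prop :=
  ∃ h : IsDisjointLift f g s, ∃ π, IsStandard (pullback.snd f g) h.baseChangeSection π

theorem existsUnique_isMarkedIsoOver {σ : Fin 3 → (T ⟶ D)} (hd : IsEtaleCoverOfDegree 3 (j ≫ f))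
    (h : IsStandardizable f g fun i ↦ σ i ≫ j) (h' : IsStandardizable f' g fun i ↦ σ i ≫ j') :
    ∃! a, IsMarkedIsoOver f f' j j' g a := by
  obtain ⟨hσ, _, hπ⟩ := h
  obtain ⟨hσ', _, hπ'⟩ := h'
  obtain ⟨e, ⟨_, he, hes⟩, he_unique⟩ := hπ.existsUnique_isIso hπ'
  refine ⟨_, isMarkedIsoOver_comp_fst hσ hσ' hd he hes, fun a ha ↦ ?_⟩
  have hl := he_unique ha.isPullback.isoPullback.hom ⟨inferInstance,
    ha.isPullback.isoPullback_hom_snd, fun i ↦ pullback.hom_ext ?_ ?_⟩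
  · rw [← hl, ha.isPullback.isoPullback_hom_fst]
  · rw [Category.assoc, ha.isPullback.isoPullback_hom_fst, hσ'.baseChangeSection_fst]
    exact ha.lift_comp _ _ _
  · simp

end MarkedIso

section StandardCover

variable {S T T' P P' D : Scheme.{u}} {f : P ⟶ S} {f' : P' ⟶ S} {j : D ⟶ P} {j' : D ⟶ P'}
  {g : T ⟶ S}

theorem P1Z.exists_opens_forall_coordSieve {n : ℕ} (φ : Fin n → (T ⟶ P1Z.{u})) (t : T) :
    ∃ U : T.Opens, t ∈ U ∧ ∀ i, coordSieve (φ i) U.ι := by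
  choose U ht i a hU using fun k ↦ exists_ratio_of_opens (φ k) t
  let W : T.Opens := ⟨⋂ k, U k, isOpen_iInter_of_finite fun k ↦ (U k).isOpen⟩
  refine ⟨W, Set.mem_iInter.2 ht, fun k ↦ ?_⟩
  rw [← T.homOfLE_ι (U := W) (Set.iInter_subset (fun k ↦ (U k : Set T)) k)]
  exact (coordSieve (φ k)).downward_closed ⟨_, _, hU k⟩ _

theorem IsP1Bundle.exists_opens_isTrivialization (hf : IsP1Bundle f) (g : T ⟶ S) (t : T) :
    ∃ V : T.Opens, t ∈ V ∧ ∃ π, IsTrivialization (pullback.snd f (V.ι ≫ g)) π := by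
  obtain ⟨U, htU, π, hπ⟩ := hf.exists_isTrivialization (g t)
  exact ⟨g ⁻¹ᵁ U, htU, _, hπ.baseChange
    (isPullback_baseChangeMap f (g ∣_ U) (morphismRestrict_ι g U).symm)⟩

namespace IsDisjointLift

theorem areDisjoint_baseChangeSection {n : ℕ} {s : Fin n → (T ⟶ P)} (h : IsDisjointLift f g s)
    {i i' : Fin n} (hi : i ≠ i') : AreDisjoint (h.baseChangeSection i) (h.baseChangeSection i') :=
  fun _ k hk ↦ h.areDisjoint hi k (by simpa using congr($hk ≫ pullback.fst f g))

theorem baseChangeSection_comp {n : ℕ} {s : Fin n → (T ⟶ P)} (h : IsDisjointLift f g s)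
    {g' : T' ⟶ S} {s' : Fin n → (T' ⟶ P)} (h' : IsDisjointLift f g' s') {k : T' ⟶ T}
    (hk : g' = k ≫ g) (hs : ∀ i, s' i = k ≫ s i) (i : Fin n) :
    h'.baseChangeSection i ≫ baseChangeMap f k hk = k ≫ h.baseChangeSection i := by
  apply pullback.hom_ext <;>
    simp [pullback.lift_fst, pullback.lift_snd, reassoc_of% h'.baseChangeSection_snd, hs]

end IsDisjointLift

theorem IsStandardizable.comp {s : Fin 3 → (T ⟶ P)} (h : IsStandardizable f g s) (k : T' ⟶ T) :
    IsStandardizable f (k ≫ g) fun i ↦ k ≫ s i :=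
  have ⟨hs, _, hπ⟩ := h
  ⟨hs.comp k, _, hπ.baseChange (isPullback_baseChangeMap f k rfl)
    (hs.comp k).baseChangeSection_snd (hs.baseChangeSection_comp _ rfl fun _ ↦ rfl)⟩

/-- The sieve of morphisms along which the lifts `s` of `g` become standardizable. -/
def standardSieve (f : P ⟶ S) (g : T ⟶ S) (s : Fin 3 → (T ⟶ P)) : Sieve T where
  arrows _ k := IsStandardizable f (k ≫ g) fun i ↦ k ≫ s i
  downward_closed hk m := by simpa only [Category.assoc] using hk.comp m

theorem IsDisjointLift.standardSieve_mem {s : Fin 3 → (T ⟶ P)} (h : IsDisjointLift f g s)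
    (hf : IsP1Bundle f) : standardSieve f g s ∈ Scheme.fppfTopology T := by
  refine mem_fppfTopology_of_etale fun t ↦ ?_
  obtain ⟨V, htV, π, hπ⟩ := hf.exists_opens_isTrivialization g t
  obtain ⟨W, htW, hW⟩ := P1Z.exists_opens_forall_coordSieve
    (fun i ↦ (h.comp V.ι).baseChangeSection i ≫ π) ⟨t, htV⟩
  let k := W.ι ≫ V.ι
  have hk : k ≫ g = W.ι ≫ V.ι ≫ g := Category.assoc _ _ _
  have hks (i : Fin 3) : k ≫ s i = W.ι ≫ V.ι ≫ s i := Category.assoc _ _ _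
  refine ⟨W, k, inferInstance, ⟨⟨_, htW⟩, rfl⟩, h.comp k,
    (hπ.baseChange (isPullback_baseChangeMap f W.ι hk)).exists_isStandard
      (h.comp k).baseChangeSection_snd
      (fun _ _ hij ↦ (h.comp k).areDisjoint_baseChangeSection hij) fun i ↦ ?_⟩
  obtain ⟨v, hv, hvW⟩ := hW i
  refine ⟨v, hv, ?_⟩
  rw [Category.id_comp, ← Category.assoc, (h.comp V.ι).baseChangeSection_comp (h.comp k) hk hks,
    Category.assoc, hvW]

/-- The sieve of morphisms to which `D` lifts as three copies of the source that are standardizable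
as sections of both `f` and `f'`. -/
def markedSieve (f : P ⟶ S) (f' : P' ⟶ S) (j : D ⟶ P) (j' : D ⟶ P') : Sieve S where
  arrows T g := ∃ σ : Fin 3 → (T ⟶ D), IsStandardizable f g (fun i ↦ σ i ≫ j) ∧
    IsStandardizable f' g (fun i ↦ σ i ≫ j')
  downward_closed := by
    rintro T T' g ⟨σ, hσ, hσ'⟩ k
    exact ⟨fun i ↦ k ≫ σ i, by simpa only [Category.assoc] using hσ.comp k,
      by simpa only [Category.assoc] using hσ'.comp k⟩

theorem markedSieve_mem (hf : IsP1Bundle f) (hf' : IsP1Bundle f') [Mono j] [Mono j']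
    (hd : IsEtaleCoverOfDegree 3 (j ≫ f)) (hj : j' ≫ f' = j ≫ f) :
    markedSieve f f' j j' ∈ Scheme.fppfTopology S := by
  -- `D` splits étale-locally, and Zariski-locally on each splitting both bundles are standard
  let R : Sieve S :=
    { arrows _ g := ∃ σ : Fin 3 → _, IsDisjointLift (j ≫ f) g σ
      downward_closed := fun ⟨σ, hσ⟩ k ↦ ⟨_, hσ.comp k⟩ }
  have hR : R ∈ Scheme.fppfTopology S := mem_fppfTopology_of_etale hd.exists_isDisjointLift
  refine GrothendieckTopology.transitive _ hR _ fun T g ⟨σ, hσ⟩ ↦ ?_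
  have hσj : IsDisjointLift f g fun i ↦ σ i ≫ j := hσ.comp_mono
  have hσj' : IsDisjointLift f' g fun i ↦ σ i ≫ j' := (hj ▸ hσ).comp_mono
  refine GrothendieckTopology.superset_covering _ ?_ (GrothendieckTopology.intersection_covering _
    (hσj.standardSieve_mem hf) (hσj'.standardSieve_mem hf'))
  rintro Z k ⟨hk, hk'⟩
  exact ⟨fun i ↦ k ≫ σ i, by simp only [Category.assoc]; exact hk,
    by simp only [Category.assoc]; exact hk'⟩

end StandardCover

/-- Let `P → S` and `P′ → S` be `ℙ¹`-bundles, let `D ⊆ P` and `D′ ⊆ P′` be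
closed subschemes which are étale covers of `S` of degree 3, and let `η : D → D′` be an
`S`-isomorphism. Then there is a unique `S`-isomorphism `α : P → P′` whose restriction to
`D` equals `η`, i.e. `α ∘ ι_D = ι_{D′} ∘ η`. -/
theorem stmt6 (S P P' : Scheme.{u}) (f : P ⟶ S) (f' : P' ⟶ S)
    (hf : IsP1Bundle f) (hf' : IsP1Bundle f')
    (D D' : Scheme.{u}) (ι : D ⟶ P) (ι' : D' ⟶ P')
    (hι : IsClosedImmersion ι) (hι' : IsClosedImmersion ι')
    (hD : IsEtaleCoverOfDegree 3 (ι ≫ f)) (hD' : IsEtaleCoverOfDegree 3 (ι' ≫ f'))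
    (η : D ⟶ D') (hη : IsIso η) (hηS : η ≫ ι' ≫ f' = ι ≫ f) :
    ∃! α : P ⟶ P', IsIso α ∧ α ≫ f' = f ∧ ι ≫ α = η ≫ ι' := by
  have : Mono (η ≫ ι') := mono_comp η ι'
  exact existsUnique_markedIso_of_mem
    (markedSieve_mem hf hf' hD (by rw [Category.assoc, hηS]))
    fun T g ⟨σ, hσ, hσ'⟩ ↦ existsUnique_isMarkedIsoOver hD hσ hσ'
end

section
/- Let S be a scheme and let P → S be a ℙ¹-bundle over S. If P → S admits three sections whose set-theoretic images in P are pairwise disjoint, then P is S-isomorphic to ℙ¹_S. -/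
universe u

open AlgebraicGeometry CategoryTheory CategoryTheory.Limits

attribute [local instance] MvPolynomial.gradedAlgebra

/-!
A point of `ℙ¹` lies in one of the two standard charts, so three disjoint sections are locally
given by coordinate vectors whose pairwise determinants are units; Cramer's rule then yields a
matrix in `GL₂` carrying `0, ∞, 1` to them. Hence the bundle is locally trivialized with the
sections at `0, ∞, 1`. Such a normalized trivialization is unique: an automorphism of `ℙ¹_R`
fixing `0, ∞, 1` preserves both charts, so it is `t ↦ p(t)` on one and `t⁻¹ ↦ q(t⁻¹)` on the other
for polynomials `p`, `q` with `p(t) q(t⁻¹) = 1`. Since `p(0) = q(0) = 0`, the polynomials `p(t)/t`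
in `t` and `q(t⁻¹)/t⁻¹` in `t⁻¹` are then inverse to each other, and as the automorphism is
invertible `p(t)/t` is also a unit of `R[t]`. So `p(t)/t` is constant, and `p(1) = 1` gives
`p(t) = t`. Therefore the normalized local trivializations agree on overlaps and glue.
-/

namespace ProjSpace

section Polynomials

open Polynomial LaurentPolynomial

variable {R : Type*} [CommRing R]

theorem eval₂_C_T_one (p : R[X]) : p.eval₂ LaurentPolynomial.C (T 1) = toLaurent p := by
  have h : eval₂RingHom LaurentPolynomial.C (T 1 : R[T;T⁻¹]) = toLaurent := by ext <;> simp
  exact congr($h p)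

theorem eval₂_C_T_neg_one (p : R[X]) :
    p.eval₂ LaurentPolynomial.C (T (-1)) = invert (toLaurent p) := by
  have h : eval₂RingHom LaurentPolynomial.C (T (-1) : R[T;T⁻¹]) =
      (invert : R[T;T⁻¹] ≃ₐ[R] R[T;T⁻¹]).toRingEquiv.toRingHom.comp toLaurent := by
    ext <;> simp
  exact congr($h p)

theorem eq_C_of_toLaurent_eq_invert {p q : R[X]} (h : toLaurent p = invert (toLaurent q)) :
    p = Polynomial.C (p.coeff 0) := by
  ext n
  rcases n.eq_zero_or_pos with rfl | hn
  · rw [coeff_C_zero]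
  have hneg : -(Nat.castEmbedding n : ℤ) ∉ Set.range (Nat.castEmbedding : ℕ ↪ ℤ) := by
    rintro ⟨m, hm : (m : ℤ) = -(n : ℤ)⟩
    omega
  have hcoeff := congr(($h).coeff (Nat.castEmbedding n))
  rw [invert_apply, coeff_toLaurent, coeff_toLaurent,
    Finsupp.mapDomain_apply Nat.castEmbedding.injective,
    Finsupp.mapDomain_of_notMem_range _ _ hneg] at hcoeff
  rw [coeff_C_of_ne_zero hn.ne']
  exact hcoeff

theorem isUnit_of_comp_X_mul_eq_X {f g : R[X]} (hg : g.eval 0 = 0) (h : g.comp (X * f) = X) :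
    IsUnit f := by
  obtain ⟨g, rfl⟩ := X_dvd_iff.2 (coeff_zero_eq_eval_zero g ▸ hg)
  rw [mul_comp, X_comp, mul_assoc] at h
  exact .of_mul_eq_one _ (isRegular_X.left (h.trans (mul_one X).symm))

theorem eq_C_of_toLaurent_mul_invert_eq_one {f g : R[X]} (hf : IsUnit f)
    (h : toLaurent f * invert (toLaurent g) = 1) : f = Polynomial.C (f.coeff 0) := by
  obtain ⟨u, rfl⟩ := hf
  have hinv : toLaurent (↑u⁻¹ : R[X]) = invert (toLaurent g) := by
    refine (u.isUnit.map toLaurent).mul_left_cancel ?_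
    rw [h, ← map_mul, Units.mul_inv, map_one]
  set c := (↑u⁻¹ : R[X]).coeff 0 with hc
  have hconst : (↑u⁻¹ : R[X]) = Polynomial.C c := eq_C_of_toLaurent_eq_invert hinv
  have hmul : c * (u : R[X]).coeff 0 = 1 := by
    rw [hc, ← mul_coeff_zero, Units.inv_mul, coeff_one_zero]
  calc (u : R[X]) = u * Polynomial.C (c * (u : R[X]).coeff 0) := by rw [hmul, map_one, mul_one]
    _ = Polynomial.C ((u : R[X]).coeff 0) := by
      rw [map_mul, ← hconst, Units.mul_inv_cancel_left]

theorem eq_X_of_toLaurent_mul_invert_eq_one {p q p' : R[X]} (hp₀ : p.eval 0 = 0)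
    (hp₁ : p.eval 1 = 1) (hq₀ : q.eval 0 = 0) (hp'₀ : p'.eval 0 = 0) (hcomp : p'.comp p = X)
    (h : toLaurent p * invert (toLaurent q) = 1) : p = X := by
  obtain ⟨f, rfl⟩ := X_dvd_iff.2 (coeff_zero_eq_eval_zero p ▸ hp₀)
  obtain ⟨g, rfl⟩ := X_dvd_iff.2 (coeff_zero_eq_eval_zero q ▸ hq₀)
  have hTT : (T 1 * T (-1) : R[T;T⁻¹]) = 1 := by rw [← T_add]; simp
  have hfg : toLaurent f * invert (toLaurent g) = 1 := by
    rwa [map_mul, map_mul, map_mul, toLaurent_X, invert_T, mul_mul_mul_comm, hTT, one_mul] at h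
  have hf := eq_C_of_toLaurent_mul_invert_eq_one (isUnit_of_comp_X_mul_eq_X hp'₀ hcomp) hfg
  rw [hf] at hp₁ ⊢
  have hone : f.coeff 0 = 1 := by simpa using hp₁
  rw [hone, map_one, mul_one]

end Polynomials

end ProjSpace

open MvPolynomial HomogeneousLocalization

/-- Projective space `Proj R[Xᵢ : i ∈ σ]` over a ring `R`. The homogeneous coordinates are indexed
by a type `σ`, so that `P1Z` is the case `σ = Fin 2` and `σ = Unit` gives `ℙ⁰`. -/
noncomputable abbrev ProjSpace (σ : Type) (R : Type u) [CommRing R] : Scheme.{u} :=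
  AlgebraicGeometry.Proj (homogeneousSubmodule σ R)

namespace ProjSpace

variable {σ τ υ : Type} {R R' R'' : Type u} [CommRing R] [CommRing R'] [CommRing R'']

section Substitution

theorem X_mem_homogeneousSubmodule (i : σ) :
    (X i : MvPolynomial σ R) ∈ homogeneousSubmodule σ R 1 :=
  isHomogeneous_X R i

theorem irrelevant_le_of_forall_X_mem {I : Ideal (MvPolynomial σ R)} (hI : ∀ i, X i ∈ I) :
    (HomogeneousIdeal.irrelevant (homogeneousSubmodule σ R)).toIdeal ≤ I := by
  rw [HomogeneousIdeal.toIdeal_irrelevant_le]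
  intro n hn x (hx : x.IsHomogeneous n)
  suffices x ∈ Ideal.span (Set.range X) from
    Ideal.span_le.2 (Set.range_subset_iff.2 hI) this
  rw [← Set.image_univ, mem_ideal_span_X_image]
  intro m hm
  have hdeg := hx (mem_support_iff.mp hm)
  by_contra! hzero
  obtain rfl : m = 0 := Finsupp.ext fun j => by simpa using hzero j
  exact hn.ne (by simpa using hdeg)

theorem eval₂_const_mul {B : Type*} [CommRing B] {x : MvPolynomial σ R} {n : ℕ}
    (hx : x.IsHomogeneous n) (f : R →+* B) (c : B) (g : σ → B) :
    eval₂ f (fun j => c * g j) x = c ^ n * eval₂ f g x := by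
  rw [eval₂_eq, eval₂_eq, Finset.mul_sum]
  refine Finset.sum_congr rfl fun m hm => ?_
  have hn : ∑ j ∈ m.support, m j = n := by
    simpa [Finsupp.weight_apply, Finsupp.sum] using hx (mem_support_iff.mp hm)
  simp_rw [mul_pow]
  rw [Finset.prod_mul_distrib, Finset.prod_pow_eq_pow_sum, hn, mul_left_comm]

theorem gradedRingHom_ext {f g : homogeneousSubmodule σ R →+*ᵍ homogeneousSubmodule τ R'}
    (hC : ∀ r, f (C r) = g (C r)) (hX : ∀ i, f (X i) = g (X i)) : f = g := by
  have h : f.toRingHom = g.toRingHom := MvPolynomial.ringHom_ext hC hX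
  exact DFunLike.ext _ _ fun x => congr($h x)

variable [Fintype τ]

/-- The graded ring homomorphism `R[σ] → R'[τ]` that is `ρ` on constants and sends `Xᵢ` to the
linear form `∑ⱼ Mᵢⱼ Xⱼ` given by the `i`-th row of `M`. -/
noncomputable def linearSubst (ρ : R →+* R') (M : Matrix σ τ R') :
    homogeneousSubmodule σ R →+*ᵍ homogeneousSubmodule τ R' where
  __ := eval₂Hom (C.comp ρ) fun i => ∑ j, C (M i j) * X j
  map_mem {n x} hx := by
    have hlin (i : σ) : (∑ j, C (M i j) * X j : MvPolynomial τ R').IsHomogeneous 1 :=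
      IsHomogeneous.sum _ _ _ fun j _ => by
        simpa using (isHomogeneous_C τ (M i j)).mul (isHomogeneous_X R' j)
    have h : (eval₂Hom (C.comp ρ) (fun i => ∑ j, C (M i j) * X j) x).IsHomogeneous (1 * n) :=
      IsHomogeneous.eval₂ hx _ _ (fun r => isHomogeneous_C _ _) hlin
    rw [one_mul] at h
    exact h

@[simp]
theorem linearSubst_C (ρ : R →+* R') (M : Matrix σ τ R') (r : R) :
    linearSubst ρ M (C r) = C (ρ r) :=
  eval₂Hom_C _ _ r

@[simp]
theorem linearSubst_X (ρ : R →+* R') (M : Matrix σ τ R') (i : σ) :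
    linearSubst ρ M (X i) = ∑ j, C (M i j) * X j :=
  eval₂Hom_X' _ _ i

theorem linearSubst_comp [Fintype υ] (ρ : R →+* R') (M : Matrix σ τ R') (ρ' : R' →+* R'')
    (M' : Matrix τ υ R'') :
    (linearSubst ρ' M').comp (linearSubst ρ M) = linearSubst (ρ'.comp ρ) (M.map ρ' * M') := by
  refine gradedRingHom_ext (fun r => by simp) fun i => ?_
  simp only [GradedRingHom.comp_apply, linearSubst_X, linearSubst_C, map_sum, map_mul,
    Matrix.mul_apply, Matrix.map_apply, Finset.mul_sum, Finset.sum_mul, mul_assoc]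
  exact Finset.sum_comm

theorem linearSubst_one_X [DecidableEq τ] (ρ : R →+* R') (i : τ) :
    linearSubst ρ (1 : Matrix τ τ R') (X i) = X i := by
  simp [Matrix.one_apply]

theorem linearSubst_id [DecidableEq τ] :
    linearSubst (RingHom.id R) (1 : Matrix τ τ R) = .id _ :=
  gradedRingHom_ext (fun r => by simp) fun i => linearSubst_one_X _ i

variable [Fintype σ] [DecidableEq τ]

/-- `M` has a left inverse. This is the condition under which the linear map `x ↦ M x` kills no
fibre coordinate vector and hence induces a morphism of projective spaces. -/
def IsLeftInvertible (M : Matrix σ τ R) : Prop :=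
  ∃ N : Matrix τ σ R, N * M = 1

theorem IsLeftInvertible.one : IsLeftInvertible (1 : Matrix τ τ R) :=
  ⟨1, one_mul 1⟩

theorem IsLeftInvertible.map_mul [DecidableEq υ] {M : Matrix σ τ R'}
    (hM : IsLeftInvertible M) (ρ' : R' →+* R'') {M' : Matrix τ υ R''} (hM' : IsLeftInvertible M') :
    IsLeftInvertible (M.map ρ' * M') := by
  obtain ⟨N, hN⟩ := hM
  obtain ⟨N', hN'⟩ := hM'
  refine ⟨N' * N.map ρ', ?_⟩
  rw [Matrix.mul_assoc, ← Matrix.mul_assoc (N.map ρ'), ← Matrix.map_mul, hN,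
    Matrix.map_one _ (map_zero ρ') (map_one ρ'), Matrix.one_mul, hN']

open HomogeneousIdeal in
theorem irrelevant_le_map_linearSubst (ρ : R →+* R') {M : Matrix σ τ R'}
    (hM : IsLeftInvertible M) :
    irrelevant (homogeneousSubmodule τ R') ≤
      (irrelevant (homogeneousSubmodule σ R)).map (linearSubst ρ M) := by
  obtain ⟨N, hN⟩ := hM
  rw [← toIdeal_le_toIdeal_iff]
  refine irrelevant_le_of_forall_X_mem fun j => ?_
  have hj : X j = ∑ i, C (N j i) * linearSubst ρ M (X i) := by
    have hNj (k : τ) : ∑ i, N j i * M i k = (1 : Matrix τ τ R') j k := by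
      rw [← hN, Matrix.mul_apply]
    simp only [linearSubst_X, Finset.mul_sum]
    rw [Finset.sum_comm]
    simp only [← mul_assoc, ← C_mul, ← Finset.sum_mul, ← map_sum, hNj]
    simp [Matrix.one_apply]
  rw [hj]
  exact Ideal.sum_mem _ fun i _ => Ideal.mul_mem_left _ _ <| Ideal.mem_map_of_mem _ <|
    mem_irrelevant_of_mem _ zero_lt_one (X_mem_homogeneousSubmodule i)

end Substitution

section Charts

/-- A constant, viewed as an element of degree `0` of the localization of `R[σ]` at `f`. -/
noncomputable def const (f : MvPolynomial σ R) : R →+* Away (homogeneousSubmodule σ R) f :=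
  (fromZeroRingHom (homogeneousSubmodule σ R) (Submonoid.powers f)).comp
    (algebraMap R (homogeneousSubmodule σ R 0))

theorem val_const (f : MvPolynomial σ R) (r : R) :
    (const f r).val = algebraMap (MvPolynomial σ R) _ (C r) :=
  Localization.mk_one_eq_algebraMap _

variable (R) in
/-- The affine coordinate `Xⱼ / Xᵢ` on the chart `Xᵢ ≠ 0`. -/
noncomputable def ratio (i j : σ) : Away (homogeneousSubmodule σ R) (X i) :=
  Away.mk _ (X_mem_homogeneousSubmodule i) 1 (X j) (X_mem_homogeneousSubmodule j)

variable (R) in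
/-- The localization map `R[σ] → R[σ][1 / Xᵢ]`, abbreviated to avoid repeating its type. -/
noncomputable abbrev localizationMap (i : σ) :
    MvPolynomial σ R →+* Localization.Away (X i : MvPolynomial σ R) :=
  algebraMap _ _

theorem val_mk_mul_X_pow (i : σ) (n : ℕ) (x : MvPolynomial σ R)
    (hx : x ∈ homogeneousSubmodule σ R (n • 1)) :
    (Away.mk _ (X_mem_homogeneousSubmodule i) n x hx).val * localizationMap R i (X i ^ n) =
      localizationMap R i x := by
  rw [Away.val_mk, Localization.mk_eq_mk']
  exact IsLocalization.mk'_spec (M := Submonoid.powers (X i)) _ x ⟨X i ^ n, n, rfl⟩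

theorem val_ratio_mul_X (i j : σ) :
    (ratio R i j).val * localizationMap R i (X i) = localizationMap R i (X j) := by
  simpa only [pow_one] using! val_mk_mul_X_pow i 1 (X j) (X_mem_homogeneousSubmodule j)

theorem isUnit_localizationMap_X (i : σ) : IsUnit (localizationMap R i (X i)) :=
  IsLocalization.Away.algebraMap_isUnit _

theorem ratio_self (i : σ) : ratio R i i = 1 :=
  val_injective _ <| (isUnit_localizationMap_X i).mul_right_cancel <| by
    rw [val_ratio_mul_X, val_one, one_mul]

/-- Setting `Xᵢ = 1`: the ring homomorphism from `R[σ]` to the coordinate ring of the chart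
`Xᵢ ≠ 0` that sends `Xⱼ` to `Xⱼ / Xᵢ`. -/
noncomputable def dehomogenize (i : σ) :
    MvPolynomial σ R →+* Away (homogeneousSubmodule σ R) (X i) :=
  eval₂Hom (const (X i)) (ratio R i)

@[simp]
theorem dehomogenize_C (i : σ) (r : R) : dehomogenize i (C r) = const (X i) r :=
  eval₂Hom_C _ _ r

@[simp]
theorem dehomogenize_X (i j : σ) : dehomogenize i (X j) = ratio R i j :=
  eval₂Hom_X' _ _ j

theorem val_dehomogenize_mul_X_pow (i : σ) {n : ℕ} {x : MvPolynomial σ R}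
    (hx : x.IsHomogeneous n) :
    (dehomogenize i x).val * localizationMap R i (X i) ^ n = localizationMap R i x := by
  let val : Away (homogeneousSubmodule σ R) (X i) →+* Localization.Away (X i : MvPolynomial σ R) :=
    algebraMap _ _
  have hsubst : eval₂Hom (val.comp (const (X i)))
      (fun j => localizationMap R i (X i) * val (ratio R i j)) = localizationMap R i :=
    MvPolynomial.ringHom_ext (fun r => (eval₂Hom_C _ _ r).trans (val_const _ r)) fun j =>
      (eval₂Hom_X' _ _ j).trans ((mul_comm _ _).trans (val_ratio_mul_X i j))
  have hscale := eval₂_const_mul hx (val.comp (const (X i))) (localizationMap R i (X i))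
    fun j => val (ratio R i j)
  rw [← coe_eval₂Hom, hsubst, mul_comm] at hscale
  rw [hscale]
  exact congr($(hom_eval₂ x (const (X i)) val (ratio R i)) * _)

theorem mk_eq_dehomogenize (i : σ) (n : ℕ) (x : MvPolynomial σ R)
    (hx : x ∈ homogeneousSubmodule σ R (n • 1)) :
    Away.mk _ (X_mem_homogeneousSubmodule i) n x hx = dehomogenize i x := by
  refine val_injective _ <| ((isUnit_localizationMap_X i).pow n).mul_right_cancel ?_
  have hhom : x.IsHomogeneous n := by simpa using hx
  rw [val_dehomogenize_mul_X_pow i hhom, ← map_pow, val_mk_mul_X_pow]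

theorem dehomogenize_surjective (i : σ) :
    Function.Surjective (dehomogenize i : MvPolynomial σ R →+* _) := fun y => by
  obtain ⟨n, x, hx, rfl⟩ := Away.mk_surjective _ (X_mem_homogeneousSubmodule i) y
  exact ⟨x, (mk_eq_dehomogenize i n x hx).symm⟩

theorem awayHom_ext {B : Type*} [CommRing B] {i : σ}
    {φ ψ : Away (homogeneousSubmodule σ R) (X i) →+* B}
    (hconst : ∀ r, φ (const (X i) r) = ψ (const (X i) r))
    (hratio : ∀ j, φ (ratio R i j) = ψ (ratio R i j)) : φ = ψ := by
  rw [← RingHom.cancel_right (dehomogenize_surjective i)]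
  exact MvPolynomial.ringHom_ext (by simpa using hconst) (by simpa using hratio)

/-- Evaluation of functions on the chart `Xᵢ ≠ 0` at the point with homogeneous coordinates `v`,
normalized so that `vᵢ = 1`. -/
noncomputable def awayEval {B : Type*} [CommRing B] (i : σ) (ρ : R →+* B) (v : σ → B)
    (hv : v i = 1) : Away (homogeneousSubmodule σ R) (X i) →+* B :=
  (IsLocalization.Away.lift (S := Localization.Away (X i : MvPolynomial σ R)) (X i)
    (g := eval₂Hom ρ v) (by simp [hv])).comp (algebraMap _ _)

theorem awayEval_apply {B : Type*} [CommRing B] (i : σ) (ρ : R →+* B) (v : σ → B) (hv : v i = 1)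
    (x : Away (homogeneousSubmodule σ R) (X i)) (y : MvPolynomial σ R)
    (hy : x.val * localizationMap R i (X i) = localizationMap R i y) :
    awayEval i ρ v hv x = eval₂Hom ρ v y := by
  have := congr(IsLocalization.Away.lift (X i) (g := eval₂Hom ρ v) (by simp [hv]) $hy)
  simpa only [map_mul, IsLocalization.Away.lift_eq, eval₂Hom_X', hv, mul_one] using! this

@[simp]
theorem awayEval_const {B : Type*} [CommRing B] (i : σ) (ρ : R →+* B) (v : σ → B)
    (hv : v i = 1) (r : R) : awayEval i ρ v hv (const (X i) r) = ρ r := by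
  rw [awayEval_apply i ρ v hv _ (C r * X i) (by rw [val_const, map_mul])]
  simp [hv]

@[simp]
theorem awayEval_ratio {B : Type*} [CommRing B] (i : σ) (ρ : R →+* B) (v : σ → B)
    (hv : v i = 1) (j : σ) : awayEval i ρ v hv (ratio R i j) = v j := by
  rw [awayEval_apply i ρ v hv _ (X j) (val_ratio_mul_X i j), eval₂Hom_X']

end Charts

section Morphisms

variable (σ R) in
/-- The structure morphism of projective space over `R`. -/
noncomputable def toSpec : ProjSpace σ R ⟶ Spec (.of R) :=
  Proj.toSpecZero (homogeneousSubmodule σ R) ≫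
    Spec.map (CommRingCat.ofHom (algebraMap R (homogeneousSubmodule σ R 0)))

theorem awayι_toSpec {f : MvPolynomial σ R} {n : ℕ} (hf : f ∈ homogeneousSubmodule σ R n)
    (hn : 0 < n) :
    Proj.awayι (homogeneousSubmodule σ R) f hf hn ≫ toSpec σ R =
      Spec.map (CommRingCat.ofHom (const f)) := by
  rw [toSpec, Proj.awayι_toSpecZero_assoc, ← Spec.map_comp]
  rfl

variable (R) in
/-- The standard affine chart `Xᵢ ≠ 0`. -/
noncomputable def chart (i : σ) :
    Spec (.of (Away (homogeneousSubmodule σ R) (X i))) ⟶ ProjSpace σ R :=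
  Proj.awayι (homogeneousSubmodule σ R) (X i) (X_mem_homogeneousSubmodule i) one_pos

instance (i : σ) : IsOpenImmersion (chart R i) := by
  unfold chart
  infer_instance

theorem opensRange_chart (i : σ) :
    (chart R i).opensRange = Proj.basicOpen (homogeneousSubmodule σ R) (X i) :=
  Proj.opensRange_awayι _ _ _ _

theorem chart_toSpec (i : σ) :
    chart R i ≫ toSpec σ R = Spec.map (CommRingCat.ofHom (const (X i))) :=
  awayι_toSpec _ _

theorem irrelevant_le_span_X :
    (HomogeneousIdeal.irrelevant (homogeneousSubmodule σ R)).toIdeal ≤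
      Ideal.span (Set.range fun i => X i) :=
  irrelevant_le_of_forall_X_mem fun i => Ideal.subset_span ⟨i, rfl⟩

variable (σ R) in
/-- The cover of projective space by its standard charts. -/
noncomputable def chartCover : (ProjSpace σ R).AffineOpenCover :=
  Proj.affineOpenCoverOfIrrelevantLESpan (homogeneousSubmodule σ R) (fun i : σ => X i)
    (m := fun _ => 1) X_mem_homogeneousSubmodule (fun _ => one_pos) irrelevant_le_span_X

theorem hom_ext_of_chart {Z : Scheme.{u}} {f g : ProjSpace σ R ⟶ Z}
    (h : ∀ i, chart R i ≫ f = chart R i ≫ g) : f = g :=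
  (chartCover σ R).openCover.hom_ext _ _ h

theorem exists_mem_basicOpen (y : ProjSpace σ R) :
    ∃ i, y ∈ Proj.basicOpen (homogeneousSubmodule σ R) (X i) := by
  have hcover := Proj.iSup_basicOpen_eq_top (homogeneousSubmodule σ R) (fun i : σ => X i)
    irrelevant_le_span_X
  exact TopologicalSpace.Opens.mem_iSup.1 (hcover.ge (TopologicalSpace.Opens.mem_top y))

theorem map_const (φ : homogeneousSubmodule σ R →+*ᵍ homogeneousSubmodule τ R') {ρ : R →+* R'}
    (hφ : ∀ r, φ (C r) = C (ρ r)) {s : MvPolynomial σ R} {t : MvPolynomial τ R'}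
    (h : Submonoid.powers s ≤ (Submonoid.powers t).comap φ) :
    (HomogeneousLocalization.map φ h).comp (const s) = (const t).comp ρ := by
  refine RingHom.ext fun r => val_injective _ ?_
  rw [RingHom.comp_apply, RingHom.comp_apply, val_const, ← hφ, ← Localization.mk_one_eq_algebraMap]
  exact congr(Localization.mk _ $(Subtype.ext (map_one φ)))

theorem map_ratio (φ : homogeneousSubmodule σ R →+*ᵍ homogeneousSubmodule τ R') {i : σ} {k : τ}
    (hik : φ (X i) = X k)
    (h : Submonoid.powers (X i) ≤ (Submonoid.powers (X k)).comap φ) (j : σ) :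
    HomogeneousLocalization.map φ h (ratio R i j) = dehomogenize k (φ (X j)) := by
  rw [← mk_eq_dehomogenize k 1 (φ (X j)) (φ.map_mem (X_mem_homogeneousSubmodule j)), ratio, Away.mk,
    HomogeneousLocalization.map_mk, Away.mk]
  congr 2
  exact Subtype.ext (by simp [hik])

theorem awayι_comp_map_of_eq (φ : homogeneousSubmodule σ R →+*ᵍ homogeneousSubmodule τ R') (hφ)
    {s : MvPolynomial σ R} {t : MvPolynomial τ R'} {n : ℕ} (hs : s ∈ homogeneousSubmodule σ R n)
    (ht : t ∈ homogeneousSubmodule τ R' n) (hn : 0 < n) (hst : φ s = t) :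
    Proj.awayι _ t ht hn ≫ Proj.map φ hφ =
      Spec.map (CommRingCat.ofHom (HomogeneousLocalization.map φ
        (Submonoid.powers_le.2 (hst ▸ Submonoid.mem_powers t)))) ≫ Proj.awayι _ s hs hn := by
  subst hst
  exact Proj.awayι_comp_map φ hφ hn s hs

variable [Fintype σ] [Fintype τ] [DecidableEq τ]

/-- The morphism of projective spaces given on homogeneous coordinates by `x ↦ M x`, over the
morphism of base schemes given by `ρ`. -/
noncomputable def linearMap (ρ : R →+* R') (M : Matrix σ τ R') (hM : IsLeftInvertible M) :
    ProjSpace τ R' ⟶ ProjSpace σ R :=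
  Proj.map (linearSubst ρ M) (irrelevant_le_map_linearSubst ρ hM)

theorem linearMap_preimage_basicOpen (ρ : R →+* R') (M : Matrix σ τ R') (hM : IsLeftInvertible M)
    (f : MvPolynomial σ R) :
    linearMap ρ M hM ⁻¹ᵁ Proj.basicOpen (homogeneousSubmodule σ R) f =
      Proj.basicOpen (homogeneousSubmodule τ R') (linearSubst ρ M f) :=
  Proj.map_preimage_basicOpen _ _ _

theorem linearMap_toSpec (ρ : R →+* R') (M : Matrix σ τ R') (hM : IsLeftInvertible M) :
    linearMap ρ M hM ≫ toSpec σ R = toSpec τ R' ≫ Spec.map (CommRingCat.ofHom ρ) := by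
  have hcover {n : ℕ} (hn : 0 < n) (f : MvPolynomial σ R) (hf : f ∈ homogeneousSubmodule σ R n) :
      Proj.awayι _ (linearSubst ρ M f) ((linearSubst ρ M).map_mem hf) hn ≫
          linearMap ρ M hM ≫ toSpec σ R =
        Proj.awayι _ (linearSubst ρ M f) ((linearSubst ρ M).map_mem hf) hn ≫
          toSpec τ R' ≫ Spec.map (CommRingCat.ofHom ρ) := by
    have htarget := awayι_toSpec (f := linearSubst ρ M f) ((linearSubst ρ M).map_mem hf) hn
    rw [linearMap, reassoc_of% awayι_comp_map_of_eq _ _ hf _ hn rfl, awayι_toSpec,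
      reassoc_of% htarget, ← Spec.map_comp, ← Spec.map_comp]
    rw [← CommRingCat.ofHom_comp, ← CommRingCat.ofHom_comp, map_const _ (linearSubst_C ρ M)]
  exact (Proj.mapAffineOpenCover _ (irrelevant_le_map_linearSubst ρ hM)).openCover.hom_ext _ _
    fun s => hcover s.1.2 s.2 s.2.2

theorem linearMap_congr {ρ ρ' : R →+* R'} {M M' : Matrix σ τ R'} (hρ : ρ = ρ') (hMM' : M = M')
    (hM : IsLeftInvertible M) : linearMap ρ M hM = linearMap ρ' M' (hMM' ▸ hM) := by
  subst hρ hMM'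
  rfl

theorem linearMap_comp [Fintype υ] [DecidableEq υ] (ρ : R →+* R') (M : Matrix σ τ R')
    (hM : IsLeftInvertible M) (ρ' : R' →+* R'') (M' : Matrix τ υ R'') (hM' : IsLeftInvertible M') :
    linearMap ρ' M' hM' ≫ linearMap ρ M hM =
      linearMap (ρ'.comp ρ) (M.map ρ' * M') (hM.map_mul ρ' hM') := by
  simp_rw [linearMap, ← Proj.map_comp, linearSubst_comp]

theorem linearMap_id : linearMap (RingHom.id R) (1 : Matrix τ τ R) .one = 𝟙 _ := by
  simp_rw [linearMap, ← Proj.map_id, linearSubst_id]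

theorem chart_linearMap (ρ : R →+* R') (M : Matrix σ τ R') (hM : IsLeftInvertible M) {i : σ} {k : τ}
    (hik : linearSubst ρ M (X i) = X k) :
    chart R' k ≫ linearMap ρ M hM =
      Spec.map (CommRingCat.ofHom (awayEval i ((const (X k)).comp ρ)
        (fun j => dehomogenize k (linearSubst ρ M (X j)))
        (by rw [hik, dehomogenize_X, ratio_self]))) ≫ chart R i := by
  rw [chart, linearMap, awayι_comp_map_of_eq _ _ (X_mem_homogeneousSubmodule i) _ _ hik, chart]
  congr 3
  refine awayHom_ext (fun r => ?_) fun j => ?_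
  · rw [awayEval_const, ← map_const _ (linearSubst_C ρ M), RingHom.comp_apply]
  · rw [awayEval_ratio, map_ratio _ hik]

end Morphisms

section BaseChange

theorem isPullback_of_cover {W X Y Z : Scheme.{u}} {f : W ⟶ X} {g : W ⟶ Y} {h : X ⟶ Z} {k : Y ⟶ Z}
    (𝒰 : X.OpenCover) {V : 𝒰.I₀ → Scheme.{u}} {a : ∀ i, V i ⟶ 𝒰.X i} {b : ∀ i, V i ⟶ W}
    (hcover : ∀ i, IsPullback (a i) (b i) (𝒰.f i) f)
    (hlocal : ∀ i, IsPullback (a i) (b i ≫ g) (𝒰.f i ≫ h) k) : IsPullback f g h k := by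
  refine Scheme.isPullback_of_openCover _ _ _ _ 𝒰 fun i => ?_
  refine (hlocal i).of_iso (hcover i).flip.isoPullback (Iso.refl _) (Iso.refl _) (Iso.refl _)
    ?_ ?_ (by simp) (by simp)
  · rw [Iso.refl_hom, Category.comp_id]
    exact (hcover i).flip.isoPullback_hom_snd.symm
  · rw [Iso.refl_hom, Category.comp_id]
    exact ((hcover i).flip.isoPullback_hom_fst_assoc g).symm

theorem isPushout_const (ρ : R →+* R') (i : σ) :
    IsPushout (CommRingCat.ofHom (const (X i : MvPolynomial σ R))) (CommRingCat.ofHom ρ)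
      (CommRingCat.ofHom (awayEval i ((const (X i)).comp ρ) (ratio R' i) (ratio_self i)))
      (CommRingCat.ofHom (const (X i))) := by
  refine ⟨⟨?_⟩, ⟨PushoutCocone.IsColimit.mk _ (fun s => CommRingCat.ofHom
    (awayEval i s.inr.hom (fun j => s.inl.hom (ratio R i j)) (by rw [ratio_self, map_one])))
    (fun s => ?_) (fun s => ?_) fun s m hinl hinr => ?_⟩⟩
  · ext r
    simp
  · ext1
    refine awayHom_ext (fun r => ?_) fun j => ?_
    · simpa using! congr($(s.condition).hom r).symm
    · simp
  · ext r
    simp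
  · ext1
    refine awayHom_ext (fun r => ?_) fun j => ?_
    · simpa using! congr($(hinr).hom r)
    · simpa using! congr($(hinl).hom (ratio R i j))

variable [Fintype σ] [DecidableEq σ]

theorem chart_linearMap_one (ρ : R →+* R') (i : σ) :
    chart R' i ≫ linearMap ρ (1 : Matrix σ σ R') .one =
      Spec.map (CommRingCat.ofHom
        (awayEval i ((const (X i)).comp ρ) (ratio R' i) (ratio_self i))) ≫ chart R i := by
  simp only [chart_linearMap ρ 1 .one (linearSubst_one_X ρ i), linearSubst_one_X, dehomogenize_X]

theorem isPullback_linearMap_one (ρ : R →+* R') :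
    IsPullback (linearMap ρ (1 : Matrix σ σ R') .one) (toSpec σ R') (toSpec σ R)
      (Spec.map (CommRingCat.ofHom ρ)) := by
  have hcover (i : σ) : IsPullback (Spec.map (CommRingCat.ofHom
      (awayEval i ((const (X i)).comp ρ) (ratio R' i) (ratio_self i)))) (chart R' i) (chart R i)
      (linearMap ρ (1 : Matrix σ σ R') .one) :=
    IsOpenImmersion.isPullback _ _ _ _ (chart_linearMap_one ρ i) (by
      rw [opensRange_chart, opensRange_chart, linearMap_preimage_basicOpen, linearSubst_one_X])
  have hlocal (i : σ) : IsPullback (Spec.map (CommRingCat.ofHom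
      (awayEval i ((const (X i)).comp ρ) (ratio R' i) (ratio_self i))))
      (chart R' i ≫ toSpec σ R') (chart R i ≫ toSpec σ R) (Spec.map (CommRingCat.ofHom ρ)) := by
    rw [chart_toSpec, chart_toSpec]
    exact isPullback_SpecMap_of_isPushout _ _ _ _ (isPushout_const ρ i)
  exact isPullback_of_cover (chartCover σ R).openCover hcover hlocal

end BaseChange

section Points

instance : IsIso (chart R ()) := by
  rw [isIso_iff_isOpenImmersion_and_surjective]
  refine ⟨inferInstance, ⟨fun y => ?_⟩⟩
  obtain ⟨i, hi⟩ := exists_mem_basicOpen y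
  exact (opensRange_chart (R := R) i).ge hi

instance : IsIso (toSpec Unit R) := by
  let e : R ≃+* Away (homogeneousSubmodule Unit R) (X ()) := RingEquiv.ofRingHom (const (X ()))
    (awayEval () (.id R) (fun _ => 1) rfl)
    (awayHom_ext (by simp) (by simp [← ratio_self]))
    (RingHom.ext <| by simp)
  have hchart : IsIso (chart R () ≫ toSpec Unit R) := by
    rw [chart_toSpec]
    exact inferInstanceAs (IsIso (Spec.map e.toCommRingCatIso.hom))
  exact IsIso.of_isIso_comp_left (chart R ()) _

variable [Fintype σ] [Fintype τ]

/-- The entries of the vector `v` generate the unit ideal. -/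
def IsUnimodular (v : σ → R) : Prop :=
  ∃ w, w ⬝ᵥ v = 1

theorem IsUnimodular.of_apply_eq_one {v : σ → R} {i : σ} (hv : v i = 1) : IsUnimodular v := by
  classical exact ⟨Pi.single i 1, by simp [hv]⟩

theorem IsUnimodular.map {v : σ → R} (hv : IsUnimodular v) (ρ : R →+* R') :
    IsUnimodular (ρ ∘ v) := by
  obtain ⟨w, hw⟩ := hv
  exact ⟨ρ ∘ w, by rw [← RingHom.map_dotProduct, hw, map_one]⟩

theorem IsUnimodular.smul {v : σ → R} (hv : IsUnimodular v) (u : Rˣ) : IsUnimodular (u • v) := by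
  obtain ⟨w, hw⟩ := hv
  exact ⟨u⁻¹ • w, by simp [smul_dotProduct, dotProduct_smul, hw]⟩

theorem IsUnimodular.isLeftInvertible {v : σ → R} (hv : IsUnimodular v) :
    IsLeftInvertible (Matrix.replicateCol Unit v) := by
  obtain ⟨w, hw⟩ := hv
  refine ⟨Matrix.replicateRow Unit w, ?_⟩
  rw [Matrix.replicateRow_mul_replicateCol, hw]
  rfl

theorem IsUnimodular.mulVec [DecidableEq σ] {M : Matrix τ σ R} (hM : IsLeftInvertible M)
    {v : σ → R} (hv : IsUnimodular v) : IsUnimodular (M.mulVec v) := by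
  obtain ⟨N, hN⟩ := hM
  obtain ⟨w, hw⟩ := hv
  exact ⟨Matrix.vecMul w N, by
    rw [← Matrix.dotProduct_mulVec, Matrix.mulVec_mulVec, hN, Matrix.one_mulVec, hw]⟩

/-- The `R'`-valued point of `ProjSpace σ R` lying over `ρ` with homogeneous coordinates `v`. -/
noncomputable def point (ρ : R →+* R') (v : σ → R') (hv : IsUnimodular v) :
    Spec (.of R') ⟶ ProjSpace σ R :=
  inv (toSpec Unit R') ≫ linearMap ρ (Matrix.replicateCol Unit v) hv.isLeftInvertible

theorem point_congr {ρ ρ' : R →+* R'} {v w : σ → R'} (hρ : ρ = ρ') (hvw : v = w)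
    (hv : IsUnimodular v) : point ρ v hv = point ρ' w (hvw ▸ hv) := by
  subst hρ hvw
  rfl

theorem point_toSpec (ρ : R →+* R') (v : σ → R') (hv : IsUnimodular v) :
    point ρ v hv ≫ toSpec σ R = Spec.map (CommRingCat.ofHom ρ) := by
  rw [point, Category.assoc, linearMap_toSpec, IsIso.inv_hom_id_assoc]

theorem point_linearMap [DecidableEq σ] (ρ : R →+* R') (M : Matrix τ σ R') (hM : IsLeftInvertible M)
    (ρ' : R' →+* R'') (v : σ → R'') (hv : IsUnimodular v) :
    point ρ' v hv ≫ linearMap ρ M hM =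
      point (ρ'.comp ρ) ((M.map ρ').mulVec v) (.mulVec (by simpa using hM.map_mul ρ' .one) hv) := by
  rw [point, Category.assoc, linearMap_comp]
  simp_rw [← Matrix.replicateCol_mulVec]
  rfl

theorem SpecMap_point (ρ : R →+* R') (v : σ → R') (hv : IsUnimodular v) (ρ' : R' →+* R'') :
    Spec.map (CommRingCat.ofHom ρ') ≫ point ρ v hv = point (ρ'.comp ρ) (ρ' ∘ v) (hv.map ρ') := by
  have hbase := linearMap_toSpec ρ' (1 : Matrix Unit Unit R'') .one
  rw [point, point, IsIso.eq_inv_comp, ← reassoc_of% hbase, IsIso.hom_inv_id_assoc, linearMap_comp]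
  simp_rw [Matrix.mul_one]
  rfl

theorem point_smul (ρ : R →+* R') (v : σ → R') (hv : IsUnimodular v) (u : R'ˣ) :
    point ρ (u • v) (hv.smul u) = point ρ v hv := by
  let M : Matrix Unit Unit R' := Matrix.of fun _ _ => (u : R')
  have hM : IsLeftInvertible M := ⟨Matrix.of fun _ _ => ((u⁻¹ : R'ˣ) : R'), by
    ext; simp [M, Matrix.mul_apply]⟩
  have hid : linearMap (RingHom.id R') M hM = 𝟙 _ := by
    rw [← cancel_mono (toSpec Unit R'), linearMap_toSpec, CommRingCat.ofHom_id, Spec.map_id,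
      Category.comp_id, Category.id_comp]
  have hscale : linearMap ρ (Matrix.replicateCol Unit (u • v)) (hv.smul u).isLeftInvertible =
      linearMap (RingHom.id R') M hM ≫ linearMap ρ _ hv.isLeftInvertible := by
    rw [linearMap_comp]
    refine linearMap_congr rfl ?_ _
    ext i j
    simp [M, Matrix.mul_apply, Units.smul_def, mul_comm]
  rw [point, hscale, hid, Category.id_comp, point]

theorem point_eq_SpecMap_chart (ρ : R →+* R') (v : σ → R') (i : σ) (hv : v i = 1) :
    point ρ v (.of_apply_eq_one hv) =
      Spec.map (CommRingCat.ofHom (awayEval i ρ v hv)) ≫ chart R i := by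
  have hlin (j : σ) : linearSubst ρ (Matrix.replicateCol Unit v) (X j) = C (v j) * X () := by simp
  have horigin : inv (toSpec Unit R') =
      Spec.map (CommRingCat.ofHom (awayEval () (.id R') (fun _ => 1) rfl)) ≫ chart R' () := by
    have hsection : (awayEval () (.id R') (fun _ => 1) rfl).comp (const (X ())) = .id R' :=
      RingHom.ext fun r => by simp
    rw [← cancel_mono (toSpec Unit R'), IsIso.inv_hom_id, Category.assoc, chart_toSpec,
      ← Spec.map_comp, ← CommRingCat.ofHom_comp, hsection, CommRingCat.ofHom_id, Spec.map_id]
  rw [point, horigin, Category.assoc, chart_linearMap _ _ _ (by rw [hlin, hv, C_1, one_mul]),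
    ← Category.assoc, ← Spec.map_comp, ← CommRingCat.ofHom_comp]
  congr 3
  refine awayHom_ext (fun r => by simp) fun j => ?_
  rw [RingHom.comp_apply, awayEval_ratio, awayEval_ratio, hlin]
  simp

theorem chart_eq_point (i : σ) :
    chart R i = point (const (X i)) (ratio R i) (.of_apply_eq_one (ratio_self i)) := by
  have hid : awayEval i (const (X i)) (ratio R i) (ratio_self i) = .id _ :=
    awayHom_ext (by simp) (by simp)
  rw [point_eq_SpecMap_chart _ _ i (ratio_self i), hid, CommRingCat.ofHom_id, Spec.map_id,
    Category.id_comp]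

theorem exists_eq_point (ρ : R →+* R') (f : Spec (.of R') ⟶ ProjSpace σ R)
    (hf : f ≫ toSpec σ R = Spec.map (CommRingCat.ofHom ρ)) {i : σ}
    (hi : Set.range f ⊆ Proj.basicOpen (homogeneousSubmodule σ R) (X i)) :
    ∃ v : σ → R', ∃ hv : v i = 1, f = point ρ v (.of_apply_eq_one hv) := by
  replace hi : Set.range f ⊆ Set.range (chart R i) := hi.trans (opensRange_chart i).ge
  obtain ⟨φ, hφ⟩ := Spec.map_surjective (IsOpenImmersion.lift (chart R i) f hi)
  have hfac : Spec.map φ ≫ chart R i = f := by rw [hφ, IsOpenImmersion.lift_fac]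
  have hconst : CommRingCat.ofHom (const (X i)) ≫ φ = CommRingCat.ofHom ρ := by
    rw [← Spec.map_injective.eq_iff, Spec.map_comp, ← chart_toSpec, reassoc_of% hfac, hf]
  have hone : φ.hom (ratio R i i) = 1 := by rw [ratio_self, map_one]
  refine ⟨fun j => φ.hom (ratio R i j), hone, ?_⟩
  rw [point_eq_SpecMap_chart _ _ i hone, ← hfac]
  congr 2
  ext1
  refine awayHom_ext (fun r => ?_) fun j => by simp
  simpa using! congr($(hconst).hom r)

theorem eq_of_point_eq {ρ : R →+* R'} {v w : σ → R'} {i : σ} (hv : v i = 1) (hw : w i = 1)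
    (h : point ρ v (.of_apply_eq_one hv) = point ρ w (.of_apply_eq_one hw)) : v = w := by
  rw [point_eq_SpecMap_chart _ _ i hv, point_eq_SpecMap_chart _ _ i hw, cancel_mono] at h
  have heval := congr($(Spec.map_injective h).hom)
  funext j
  simpa using! congr($heval (ratio R i j))

theorem point_notMem_basicOpen {ρ : R →+* R'} {v : σ → R'} {hv : IsUnimodular v} {i : σ}
    (hvi : v i = 0) (x : Spec (.of R')) :
    point ρ v hv x ∉ Proj.basicOpen (homogeneousSubmodule σ R) (X i) := fun hx => by
  have hpre : inv (toSpec Unit R') x ∈ linearMap ρ _ hv.isLeftInvertible ⁻¹ᵁ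
      Proj.basicOpen (homogeneousSubmodule σ R) (X i) := hx
  simp [linearMap_preimage_basicOpen, hvi] at hpre

theorem forall_point_mem_basicOpen_iff (ρ : R →+* R') (v : σ → R') (hv : IsUnimodular v) (i : σ) :
    (∀ x, point ρ v hv x ∈ Proj.basicOpen (homogeneousSubmodule σ R) (X i)) ↔ IsUnit (v i) := by
  refine ⟨fun h => ?_, fun ⟨u, hu⟩ x => ?_⟩
  · by_contra hunit
    obtain ⟨m, hm, hvm⟩ := exists_max_ideal_of_mem_nonunits hunit
    let x : Spec (.of (R' ⧸ m)) := Classical.arbitrary (PrimeSpectrum (R' ⧸ m))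
    have hx := h (Spec.map (CommRingCat.ofHom (Ideal.Quotient.mk m)) x)
    rw [← Scheme.Hom.comp_apply, SpecMap_point] at hx
    exact point_notMem_basicOpen (Ideal.Quotient.eq_zero_iff_mem.2 hvm) x hx
  · have hone : (u⁻¹ • v) i = 1 := by simp [Units.smul_def, ← hu]
    rw [← point_smul ρ v hv u⁻¹, point_eq_SpecMap_chart _ _ i hone, ← opensRange_chart]
    exact ⟨_, rfl⟩

theorem exists_smul_eq_of_point_eq {ρ : R →+* R'} {v w : σ → R'} {i : σ} (hv : v i = 1)
    {hw : IsUnimodular w} (h : point ρ v (.of_apply_eq_one hv) = point ρ w hw) :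
    ∃ u : R'ˣ, w = u • v := by
  obtain ⟨u, hu⟩ : IsUnit (w i) := (forall_point_mem_basicOpen_iff ρ w hw i).1 fun x =>
    h ▸ (forall_point_mem_basicOpen_iff ρ v _ i).2 (hv ▸ isUnit_one) x
  have hone : (u⁻¹ • w) i = 1 := by simp [Units.smul_def, ← hu]
  refine ⟨u, ?_⟩
  rw [eq_of_point_eq hv hone (h.trans (point_smul ρ w hw u⁻¹).symm), smul_inv_smul]

end Points

section ProjectiveLine

/-- The vector with entry `1` in position `i` and `a` in the other position: homogeneous coordinates
of the point with affine coordinate `a` in the chart `Xᵢ ≠ 0` of the projective line. -/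
def affineVec (i : Fin 2) (a : R) : Fin 2 → R :=
  Function.update (fun _ => a) i 1

theorem affineVec_self (i : Fin 2) (a : R) : affineVec i a i = 1 :=
  Function.update_self ..

theorem affineVec_of_ne {i j : Fin 2} (hij : i ≠ j) (a : R) : affineVec i a j = a :=
  Function.update_of_ne hij.symm ..

theorem eq_affineVec {i j : Fin 2} (hij : i ≠ j) {v : Fin 2 → R} (hv : v i = 1) :
    v = affineVec i (v j) := by
  funext k
  obtain rfl | rfl : k = i ∨ k = j := by omega
  · rw [hv, affineVec_self]
  · rw [affineVec_of_ne hij]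

theorem comp_affineVec (ρ : R →+* R') (i : Fin 2) (a : R) :
    ρ ∘ affineVec i a = affineVec i (ρ a) := by
  funext k
  simp [affineVec, Function.update_apply, apply_ite ρ]

/-- The point over `ρ` of the projective line with affine coordinate `a` in the chart `Xᵢ ≠ 0`. -/
noncomputable def affinePoint (ρ : R →+* R') (i : Fin 2) (a : R') :
    Spec (.of R') ⟶ ProjSpace (Fin 2) R :=
  point ρ (affineVec i a) (.of_apply_eq_one (affineVec_self i a))

theorem SpecMap_affinePoint (ρ : R →+* R') (i : Fin 2) (a : R') (ρ' : R' →+* R'') :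
    Spec.map (CommRingCat.ofHom ρ') ≫ affinePoint ρ i a = affinePoint (ρ'.comp ρ) i (ρ' a) :=
  (SpecMap_point ..).trans (point_congr rfl (comp_affineVec ρ' i a) _)

theorem affinePoint_injective (ρ : R →+* R') (i : Fin 2) :
    Function.Injective (affinePoint ρ i) := fun a b h => by
  obtain ⟨j, hij⟩ : ∃ j, i ≠ j := (exists_ne i).imp fun _ => .symm
  have hvec := eq_of_point_eq (affineVec_self i a) (affineVec_self i b) h
  simpa only [affineVec_of_ne hij] using congr($hvec j)

theorem affinePoint_eq_iff_mul_eq_one (ρ : R →+* R') {i j : Fin 2} (hij : i ≠ j) {a b : R'} :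
    affinePoint ρ i a = affinePoint ρ j b ↔ a * b = 1 := by
  constructor
  · intro h
    obtain ⟨u, hu⟩ := exists_smul_eq_of_point_eq (affineVec_self i a) h
    have hi : b = u := by
      simpa [affineVec_self, affineVec_of_ne hij.symm, Units.smul_def] using congr($hu i)
    have hj : 1 = u * a := by
      simpa [affineVec_self, affineVec_of_ne hij, Units.smul_def] using congr($hu j)
    rw [hi, mul_comm, ← hj]
  · intro hab
    let u : R'ˣ := ⟨b, a, (mul_comm b a).trans hab, hab⟩
    have hu : u • affineVec i a = affineVec j b := by
      rw [eq_affineVec hij.symm (v := u • affineVec i a)]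
      · simp [affineVec_self, u, Units.smul_def]
      · simp [affineVec_of_ne hij, u, Units.smul_def, mul_comm b, hab]
    exact (point_smul ρ _ _ u).symm.trans (point_congr rfl hu _)

theorem chart_eq_affinePoint {i j : Fin 2} (hij : i ≠ j) :
    chart R i = affinePoint (const (X i)) i (ratio R i j) :=
  (chart_eq_point i).trans (point_congr rfl (eq_affineVec hij (ratio_self i)) _)

theorem exists_affinePoint_zero_eq_of_notMem_basicOpen {i j : Fin 2} (hij : i ≠ j)
    {y : ProjSpace (Fin 2) R} (hy : y ∉ Proj.basicOpen (homogeneousSubmodule (Fin 2) R) (X j)) :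
    ∃ x, affinePoint (.id R) i 0 x = y := by
  have hyi : y ∈ Proj.basicOpen (homogeneousSubmodule (Fin 2) R) (X i) := by
    obtain ⟨k, hk⟩ := exists_mem_basicOpen y
    obtain rfl | rfl : k = i ∨ k = j := by omega
    exacts [hk, absurd hk hy]
  let f := (ProjSpace (Fin 2) R).fromSpecResidueField y
  obtain ⟨ρ, hρ⟩ := Spec.map_surjective (f ≫ toSpec (Fin 2) R)
  obtain ⟨v, hvi, hv⟩ := exists_eq_point ρ.hom f hρ.symm (i := i) (by
    rw [Scheme.range_fromSpecResidueField]
    exact Set.singleton_subset_iff.2 hyi)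
  have hvj : v j = 0 := by
    by_contra hne
    have hmem := (forall_point_mem_basicOpen_iff ρ.hom v (.of_apply_eq_one hvi) j).2 (Ne.isUnit hne)
      (IsLocalRing.closedPoint ((ProjSpace (Fin 2) R).residueField y))
    have hval := congr($hv (IsLocalRing.closedPoint ((ProjSpace (Fin 2) R).residueField y)))
    exact hy ((Scheme.fromSpecResidueField_apply y _).symm.trans hval ▸ hmem)
  have hzero : Spec.map ρ ≫ affinePoint (.id R) i 0 = f := by
    rw [hv, ← CommRingCat.ofHom_hom ρ, SpecMap_affinePoint]
    refine point_congr rfl ?_ _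
    rw [eq_affineVec hij hvi, hvj, map_zero]
  refine ⟨Spec.map ρ (IsLocalRing.closedPoint _), ?_⟩
  exact congr($hzero _).trans (Scheme.fromSpecResidueField_apply ..)

end ProjectiveLine

section Rigidity

/-- Homogeneous coordinates of the three standard points `0, ∞, 1` of the projective line. -/
def frame : Fin 3 → Fin 2 → R :=
  ![![1, 0], ![0, 1], ![1, 1]]

theorem frame_castSucc (i : Fin 2) : frame i.castSucc = affineVec i (0 : R) := by
  funext k
  fin_cases i <;> fin_cases k <;> rfl

theorem frame_last (i : Fin 2) : frame (Fin.last 2) = affineVec i (1 : R) := by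
  funext k
  fin_cases i <;> fin_cases k <;> rfl

theorem comp_frame (ρ : R →+* R') (k : Fin 3) : ρ ∘ frame k = frame k := by
  funext l
  fin_cases k <;> fin_cases l <;> simp [frame]

theorem isUnimodular_frame (k : Fin 3) : IsUnimodular (frame k : Fin 2 → R) := by
  refine Fin.lastCases ?_ (fun i => ?_) k
  · rw [frame_last 0]
    exact .of_apply_eq_one (affineVec_self 0 1)
  · rw [frame_castSucc]
    exact .of_apply_eq_one (affineVec_self i 0)

/-- The automorphism `θ` of the projective line is an `R`-morphism that fixes `0`, `∞` and `1`. -/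
structure FixesFrame (θ : ProjSpace (Fin 2) R ≅ ProjSpace (Fin 2) R) : Prop where
  hom_toSpec : θ.hom ≫ toSpec (Fin 2) R = toSpec (Fin 2) R
  point_hom (k : Fin 3) : point (.id R) (frame k) (isUnimodular_frame k) ≫ θ.hom =
    point (.id R) (frame k) (isUnimodular_frame k)

namespace FixesFrame

variable {θ : ProjSpace (Fin 2) R ≅ ProjSpace (Fin 2) R}

theorem symm (h : FixesFrame θ) : FixesFrame θ.symm where
  hom_toSpec := (Iso.inv_comp_eq θ).2 h.hom_toSpec.symm
  point_hom k := (Iso.comp_inv_eq θ).2 (h.point_hom k).symm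

theorem affinePoint_zero_hom (h : FixesFrame θ) (i : Fin 2) :
    affinePoint (.id R) i 0 ≫ θ.hom = affinePoint (.id R) i 0 := by
  simpa only [frame_castSucc] using! h.point_hom i.castSucc

theorem affinePoint_one_hom (h : FixesFrame θ) (i : Fin 2) :
    affinePoint (.id R) i 1 ≫ θ.hom = affinePoint (.id R) i 1 := by
  simpa only [frame_last i] using! h.point_hom (Fin.last 2)

theorem hom_mem_basicOpen (h : FixesFrame θ) {i : Fin 2} {y : ProjSpace (Fin 2) R}
    (hy : y ∈ Proj.basicOpen (homogeneousSubmodule (Fin 2) R) (X i)) :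
    θ.hom y ∈ Proj.basicOpen (homogeneousSubmodule (Fin 2) R) (X i) := by
  obtain ⟨j, hji⟩ := exists_ne i
  by_contra hn
  obtain ⟨x, hx⟩ := exists_affinePoint_zero_eq_of_notMem_basicOpen hji hn
  have hfix : θ.hom (θ.hom y) = θ.hom y := by
    rw [← hx, ← Scheme.Hom.comp_apply, h.affinePoint_zero_hom]
  rw [θ.hom.homeomorph.injective hfix] at hn
  exact hn hy

theorem exists_polynomial (h : FixesFrame θ) (i : Fin 2) : ∃ p : Polynomial R,
    (∀ {R' : Type u} [CommRing R'] (ρ : R →+* R') (a : R'),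
      affinePoint ρ i a ≫ θ.hom = affinePoint ρ i (p.eval₂ ρ a)) ∧
    p.eval 0 = 0 ∧ p.eval 1 = 1 := by
  obtain ⟨j, hij⟩ : ∃ j, i ≠ j := (exists_ne i).imp fun _ => .symm
  let g := affinePoint (Polynomial.C : R →+* Polynomial R) i Polynomial.X ≫ θ.hom
  have hg : g ≫ toSpec (Fin 2) R = Spec.map (CommRingCat.ofHom Polynomial.C) := by
    rw [Category.assoc, h.hom_toSpec, affinePoint, point_toSpec]
  obtain ⟨v, hvi, hv⟩ := exists_eq_point Polynomial.C g hg (i := i) (by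
    rintro _ ⟨x, rfl⟩
    refine h.hom_mem_basicOpen ((forall_point_mem_basicOpen_iff _ _ _ _).2 ?_ x)
    rw [affineVec_self]
    exact isUnit_one)
  have hp {R' : Type u} [CommRing R'] (ρ : R →+* R') (a : R') :
      affinePoint ρ i a ≫ θ.hom = affinePoint ρ i ((v j).eval₂ ρ a) := by
    have hg' : affinePoint Polynomial.C i Polynomial.X ≫ θ.hom = affinePoint Polynomial.C i (v j) :=
      hv.trans (point_congr rfl (eq_affineVec hij hvi) _)
    let eval : Polynomial R →+* R' := Polynomial.eval₂RingHom ρ a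
    have hρ : eval.comp Polynomial.C = ρ := RingHom.ext fun r => Polynomial.eval₂_C ρ a
    have ha : eval Polynomial.X = a := Polynomial.eval₂_X ρ a
    have hspec := congr(Spec.map (CommRingCat.ofHom eval) ≫ $hg')
    rwa [← Category.assoc, SpecMap_affinePoint, SpecMap_affinePoint, hρ, ha] at hspec
  have hfix {a : R} (ha : affinePoint (.id R) i a ≫ θ.hom = affinePoint (.id R) i a) :
      (v j).eval a = a :=
    affinePoint_injective (.id R) i ((hp (.id R) a).symm.trans ha)
  exact ⟨v j, hp, hfix (h.affinePoint_zero_hom i), hfix (h.affinePoint_one_hom i)⟩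

theorem hom_eq_id (h : FixesFrame θ) : θ.hom = 𝟙 _ := by
  refine hom_ext_of_chart fun i => ?_
  obtain ⟨j, hij⟩ : ∃ j, i ≠ j := (exists_ne i).imp fun _ => .symm
  obtain ⟨p, hp, hp₀, hp₁⟩ := h.exists_polynomial i
  obtain ⟨q, hq, hq₀, -⟩ := h.exists_polynomial j
  obtain ⟨p', hp', hp'₀, -⟩ := h.symm.exists_polynomial i
  have hcomp : p'.comp p = Polynomial.X := by
    refine affinePoint_injective Polynomial.C i ?_
    have hpp' := hp' Polynomial.C (p.eval₂ Polynomial.C Polynomial.X)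
    rw [← hp, Category.assoc, Iso.symm_hom, Iso.hom_inv_id, Category.comp_id,
      Polynomial.eval₂_C_X] at hpp'
    exact hpp'.symm
  have hoverlap : affinePoint LaurentPolynomial.C i (LaurentPolynomial.T 1) =
      affinePoint (LaurentPolynomial.C : R →+* LaurentPolynomial R) j (LaurentPolynomial.T (-1)) :=
    (affinePoint_eq_iff_mul_eq_one _ hij).2 <| by
      rw [← LaurentPolynomial.T_add, add_neg_cancel, LaurentPolynomial.T_zero]
  have hinv : p.toLaurent * LaurentPolynomial.invert q.toLaurent = 1 := by
    rw [← eval₂_C_T_one, ← eval₂_C_T_neg_one,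
      ← affinePoint_eq_iff_mul_eq_one LaurentPolynomial.C hij, ← hp, ← hq, hoverlap]
  rw [eq_X_of_toLaurent_mul_invert_eq_one hp₀ hp₁ hq₀ hp'₀ hcomp hinv] at hp
  rw [chart_eq_affinePoint hij, hp, Polynomial.eval₂_X, Category.comp_id]

end FixesFrame

end Rigidity

section Frames

theorem IsLeftInvertible.of_gl [Fintype σ] [DecidableEq σ] (M : GL σ R) :
    IsLeftInvertible (M : Matrix σ σ R) :=
  ⟨_, M.inv_mul⟩

/-- The automorphism of projective space over `R` given by an invertible matrix. -/
noncomputable def linearIso [Fintype σ] [DecidableEq σ] (M : GL σ R) :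
    ProjSpace σ R ≅ ProjSpace σ R where
  hom := linearMap (.id R) M (.of_gl M)
  inv := linearMap (.id R) (M⁻¹ : GL σ R) (.of_gl M⁻¹)
  hom_inv_id := by
    rw [linearMap_comp, ← linearMap_id]
    exact linearMap_congr rfl M.inv_mul _
  inv_hom_id := by
    rw [linearMap_comp, ← linearMap_id]
    exact linearMap_congr rfl M.mul_inv _

theorem det_of_fin_two (v w : Fin 2 → R) : (Matrix.of ![v, w]).det = v 0 * w 1 - v 1 * w 0 :=
  Matrix.det_fin_two _

theorem exists_smul_eq_of_det_eq_zero {v w : Fin 2 → R} (hv : IsUnimodular v)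
    (hw : IsUnimodular w) (hdet : (Matrix.of ![v, w]).det = 0) : ∃ u : Rˣ, w = u • v := by
  obtain ⟨a, ha⟩ := hv
  obtain ⟨b, hb⟩ := hw
  have hsmul : w = (a ⬝ᵥ w) • v := by
    rw [det_of_fin_two] at hdet
    rw [Matrix.vec2_dotProduct] at ha ⊢
    refine funext (Fin.forall_fin_two.2 ⟨?_, ?_⟩) <;> rw [Pi.smul_apply, smul_eq_mul]
    · linear_combination -w 0 * ha - a 1 * hdet
    · linear_combination -w 1 * ha + a 0 * hdet
  have hunit : (a ⬝ᵥ w) * (b ⬝ᵥ v) = 1 := by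
    rw [← smul_eq_mul, ← dotProduct_smul, ← hsmul, hb]
  exact ⟨.mkOfMulEqOne _ _ hunit, hsmul⟩

theorem isUnit_det_of_disjoint {ρ : R →+* R'} {v w : Fin 2 → R'} {hv : IsUnimodular v}
    {hw : IsUnimodular w}
    (hdisj : Disjoint (Set.range (point ρ v hv)) (Set.range (point ρ w hw))) :
    IsUnit (Matrix.of ![v, w]).det := by
  by_contra hunit
  obtain ⟨m, hm, hmem⟩ := exists_max_ideal_of_mem_nonunits hunit
  let π := Ideal.Quotient.mk m
  have hdet : (Matrix.of ![π ∘ v, π ∘ w]).det = 0 := by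
    rw [← Ideal.Quotient.eq_zero_iff_mem.2 hmem, det_of_fin_two, det_of_fin_two]
    simp [π]
  obtain ⟨u, hu⟩ := exists_smul_eq_of_det_eq_zero (hv.map π) (hw.map π) hdet
  have heq : Spec.map (CommRingCat.ofHom π) ≫ point ρ w hw =
      Spec.map (CommRingCat.ofHom π) ≫ point ρ v hv := by
    rw [SpecMap_point, SpecMap_point, ← point_smul _ _ (hv.map π) u]
    exact point_congr rfl hu _
  let x : Spec (.of (R' ⧸ m)) := Classical.arbitrary (PrimeSpectrum (R' ⧸ m))
  exact Set.disjoint_left.1 hdisj ⟨Spec.map (CommRingCat.ofHom π) x, rfl⟩ ⟨_, congr($heq x)⟩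

theorem det_smul_add_det_smul (v w x : Fin 2 → R) :
    (Matrix.of ![x, w]).det • v + (Matrix.of ![v, x]).det • w = (Matrix.of ![v, w]).det • x := by
  simp only [det_of_fin_two]
  refine funext (Fin.forall_fin_two.2 ⟨?_, ?_⟩) <;>
    simp only [Pi.add_apply, Pi.smul_apply, smul_eq_mul] <;> ring

theorem exists_mulVec_frame_eq_smul {v : Fin 3 → Fin 2 → R}
    (hv : ∀ i j, i ≠ j → IsUnit (Matrix.of ![v i, v j]).det) :
    ∃ (M : GL (Fin 2) R) (c : Fin 3 → Rˣ), ∀ k, M.1.mulVec (frame k) = c k • v k := by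
  obtain ⟨d, hd⟩ := hv 0 1 (by decide)
  obtain ⟨l, hl⟩ := hv 2 1 (by decide)
  obtain ⟨m, hm⟩ := hv 0 2 (by decide)
  let A : Matrix (Fin 2) (Fin 2) R := (Matrix.of ![l • v 0, m • v 1]).transpose
  have hA (w : Fin 2 → R) : A.mulVec w = w 0 • l • v 0 + w 1 • m • v 1 := by
    rw [Matrix.mulVec_transpose, Matrix.vecMul_eq_sum, Fin.sum_univ_two]
    rfl
  have hdet : A.det = (l * m * d : Rˣ) := by
    rw [Matrix.det_transpose, Units.val_mul, Units.val_mul, hd]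
    simp only [det_of_fin_two, Pi.smul_apply, Units.smul_def, smul_eq_mul]
    ring
  have hcramer : l • v 0 + m • v 1 = d • v 2 := by
    simp only [Units.smul_def, hl, hm, hd, det_smul_add_det_smul]
  obtain ⟨M, hM⟩ := (Matrix.isUnit_iff_isUnit_det A).2 (hdet ▸ Units.isUnit _)
  refine ⟨M, ![l, m, d], fun k => ?_⟩
  rw [hM, hA]
  fin_cases k <;> simp [frame, hcramer]

theorem exists_iso_of_disjoint {v : Fin 3 → Fin 2 → R} (hv : ∀ k, IsUnimodular (v k))
    (hdisj : ∀ i j, i ≠ j → Disjoint (Set.range (point (.id R) (v i) (hv i)))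
      (Set.range (point (.id R) (v j) (hv j)))) :
    ∃ θ : ProjSpace (Fin 2) R ≅ ProjSpace (Fin 2) R, θ.hom ≫ toSpec (Fin 2) R = toSpec (Fin 2) R ∧
      ∀ k, point (.id R) (frame k) (isUnimodular_frame k) ≫ θ.hom =
        point (.id R) (v k) (hv k) := by
  obtain ⟨M, c, hM⟩ :=
    exists_mulVec_frame_eq_smul fun i j hij => isUnit_det_of_disjoint (hdisj i j hij)
  refine ⟨linearIso M, ?_, fun k => ?_⟩
  · rw [linearIso, linearMap_toSpec, CommRingCat.ofHom_id, Spec.map_id, Category.comp_id]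
  · rw [linearIso, point_linearMap, ← point_smul _ _ (hv k) (c k)]
    exact point_congr rfl (hM k) _

end Frames

section Trivialization

variable {Y T Y' T' : Scheme.{u}}

/-- The sections `0, ∞, 1` of the projective line over `ℤ`, for `k = 0, 1, 2`. -/
noncomputable def intPoint (k : Fin 3) : Spec (.of (ULift.{u} ℤ)) ⟶ P1Z.{u} :=
  point (.id (ULift.{u} ℤ)) (frame k) (isUnimodular_frame k)

/-- The `T`-valued points `0, ∞, 1` of the projective line over `ℤ`, for `k = 0, 1, 2`. -/
noncomputable def standardPoint (k : Fin 3) (T : Scheme.{u}) : T ⟶ P1Z.{u} :=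
  specULiftZIsTerminal.from T ≫ intPoint k

theorem comp_standardPoint (k : Fin 3) (g : T' ⟶ T) :
    g ≫ standardPoint k T = standardPoint k T' := by
  rw [standardPoint, standardPoint, ← Category.assoc, specULiftZIsTerminal.hom_ext (g ≫ _)]

theorem SpecMap_intPoint (ρ : ULift.{u} ℤ →+* R) (k : Fin 3) :
    Spec.map (CommRingCat.ofHom ρ) ≫ intPoint k = standardPoint k (Spec (.of R)) := by
  rw [standardPoint, specULiftZIsTerminal.hom_ext (Spec.map _)]

variable (R) in
/-- The unique ring homomorphism to `R` from the universe lift of `ℤ`. -/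
def intHom : ULift.{u} ℤ →+* R :=
  (Int.castRingHom R).comp ULift.ringEquiv.toRingHom

variable (R) in
/-- The projection of the projective line over `R` to the projective line over `ℤ`. -/
noncomputable def toP1Z : ProjSpace (Fin 2) R ⟶ P1Z.{u} :=
  linearMap (intHom R) 1 .one

theorem toP1Z_preimage_basicOpen (i : Fin 2) :
    toP1Z R ⁻¹ᵁ Proj.basicOpen (homogeneousSubmodule (Fin 2) (ULift.{u} ℤ)) (X i) =
      Proj.basicOpen (homogeneousSubmodule (Fin 2) R) (X i) :=
  (linearMap_preimage_basicOpen _ _ _ _).trans (by rw [linearSubst_one_X])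

theorem point_toP1Z (k : Fin 3) :
    point (.id R) (frame k) (isUnimodular_frame k) ≫ toP1Z R =
      standardPoint k (Spec (.of R)) := by
  have hspec := SpecMap_point (.id _) (frame k) (isUnimodular_frame k) (intHom R)
  have hlin := point_linearMap (intHom R) 1 .one (.id R) (frame k) (isUnimodular_frame k)
  rw [← SpecMap_intPoint (intHom R)]
  refine hlin.trans (.trans ?_ hspec.symm)
  exact point_congr rfl (by simp [comp_frame]) _

/-- `h` is the second component of an isomorphism `Y ≅ ℙ¹_T` over `T`: the square formed by
`f : Y ⟶ T` and `h` is cartesian. -/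
def IsTrivialization (f : Y ⟶ T) (h : Y ⟶ P1Z.{u}) : Prop :=
  IsPullback f h (terminal.from T) (terminal.from P1Z.{u})

theorem isTrivialization_toP1Z : IsTrivialization (toSpec (Fin 2) R) (toP1Z R) :=
  (isPullback_linearMap_one (intHom R)).flip.of_iso (Iso.refl _) (Iso.refl _)
    (Iso.refl _) (specULiftZIsTerminal.uniqueUpToIso terminalIsTerminal)
    (by simp) ((Category.comp_id _).trans (Category.id_comp _).symm)
    (terminalIsTerminal.hom_ext _ _) (terminalIsTerminal.hom_ext _ _)

theorem IsTrivialization.of_iso {f : Y ⟶ T} {h : Y ⟶ P1Z.{u}} {f' : Y' ⟶ T}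
    (H : IsTrivialization f h) (a : Y' ≅ Y) (ha : a.hom ≫ f = f') :
    IsTrivialization f' (a.hom ≫ h) :=
  IsPullback.of_iso H a.symm (Iso.refl _) (Iso.refl _) (Iso.refl _)
    (by simp [← ha]) (by simp) (by simp) (by simp)

theorem IsTrivialization.baseChange {f : Y ⟶ T} {h : Y ⟶ P1Z.{u}} (H : IsTrivialization f h)
    {f' : Y' ⟶ T'} {a : Y' ⟶ Y} {g : T' ⟶ T} (hp : IsPullback f' a g f) :
    IsTrivialization f' (a ≫ h) := by
  have hpaste := hp.flip.paste_horiz (IsPullback.flip H)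
  rw [terminalIsTerminal.hom_ext (g ≫ terminal.from T) (terminal.from T')] at hpaste
  exact hpaste.flip

/-- The trivialization `h` of `f : Y ⟶ T` carries the sections `s` of `f` to `0, ∞, 1`. -/
structure IsFramedTrivialization (f : Y ⟶ T) (s : Fin 3 → (T ⟶ Y)) (h : Y ⟶ P1Z.{u}) : Prop where
  isTrivialization : IsTrivialization f h
  comp_eq (k : Fin 3) : s k ≫ h = standardPoint k T

theorem IsFramedTrivialization.baseChange {f : Y ⟶ T} {s : Fin 3 → (T ⟶ Y)} {h : Y ⟶ P1Z.{u}}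
    (H : IsFramedTrivialization f s h) {f' : Y' ⟶ T'} {a : Y' ⟶ Y} {g : T' ⟶ T}
    (hp : IsPullback f' a g f) {s' : Fin 3 → (T' ⟶ Y')} (hs' : ∀ k, s' k ≫ a = g ≫ s k) :
    IsFramedTrivialization f' s' (a ≫ h) where
  isTrivialization := H.isTrivialization.baseChange hp
  comp_eq k := by rw [reassoc_of% hs', H.comp_eq, comp_standardPoint]

variable {f : Y ⟶ Spec (.of R)} {s : Fin 3 → (Spec (.of R) ⟶ Y)} {h h' : Y ⟶ P1Z.{u}}

theorem IsTrivialization.exists_iso (H : IsTrivialization f h) :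
    ∃ a : Y ≅ ProjSpace (Fin 2) R, a.hom ≫ toSpec (Fin 2) R = f ∧ a.hom ≫ toP1Z R = h :=
  ⟨IsPullback.isoIsPullback _ _ H isTrivialization_toP1Z,
    IsPullback.isoIsPullback_hom_fst _ _ _ _, IsPullback.isoIsPullback_hom_snd _ _ _ _⟩

theorem IsFramedTrivialization.exists_iso (H : IsFramedTrivialization f s h)
    (hs : ∀ k, s k ≫ f = 𝟙 _) :
    ∃ a : Y ≅ ProjSpace (Fin 2) R, a.hom ≫ toSpec (Fin 2) R = f ∧ a.hom ≫ toP1Z R = h ∧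
      ∀ k, s k ≫ a.hom = point (.id R) (frame k) (isUnimodular_frame k) := by
  obtain ⟨a, haf, hah⟩ := H.isTrivialization.exists_iso
  refine ⟨a, haf, hah, fun k => IsPullback.hom_ext isTrivialization_toP1Z ?_ ?_⟩
  · rw [Category.assoc, haf, hs, point_toSpec, CommRingCat.ofHom_id, Spec.map_id]
  · rw [Category.assoc, hah, H.comp_eq, point_toP1Z]

theorem IsFramedTrivialization.unique_of_affine (hs : ∀ k, s k ≫ f = 𝟙 _)
    (H : IsFramedTrivialization f s h) (H' : IsFramedTrivialization f s h') : h = h' := by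
  obtain ⟨a, haf, hah, has⟩ := H.exists_iso hs
  obtain ⟨b, hbf, hbh, hbs⟩ := H'.exists_iso hs
  have hfix : FixesFrame (a.symm ≪≫ b) := by
    refine ⟨?_, fun k => ?_⟩
    · rw [Iso.trans_hom, Iso.symm_hom, Category.assoc, hbf, ← haf, a.inv_hom_id_assoc]
    · rw [Iso.trans_hom, Iso.symm_hom, ← has, Category.assoc, a.hom_inv_id_assoc, hbs, has]
  have hab : b.hom = a.hom :=
    ((Iso.inv_comp_eq a).1 hfix.hom_eq_id).trans (Category.comp_id _)
  rw [← hah, ← hab, hbh]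

theorem disjoint_range_of_comp_eq {a b : T' ⟶ Y'} {c : Y' ⟶ Y} {g : T' ⟶ T} {s t : T ⟶ Y}
    (ha : a ≫ c = g ≫ s) (hb : b ≫ c = g ≫ t) (hst : Disjoint (Set.range s) (Set.range t)) :
    Disjoint (Set.range a) (Set.range b) := by
  refine Set.disjoint_left.2 ?_
  rintro _ ⟨x, rfl⟩ ⟨y, hy⟩
  have hgy : t (g y) = c (b y) := congr($hb y).symm
  exact Set.disjoint_left.1 hst ⟨g x, congr($ha x).symm⟩ ⟨g y, hgy.trans congr(c $hy)⟩

theorem exists_isFramedTrivialization_of_affine (hs : ∀ k, s k ≫ f = 𝟙 _)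
    (hdisj : ∀ i j, i ≠ j → Disjoint (Set.range (s i)) (Set.range (s j)))
    (H : IsTrivialization f h) (hchart : ∀ k, ∃ i : Fin 2, ∀ x, (s k ≫ h) x ∈
      Proj.basicOpen (homogeneousSubmodule (Fin 2) (ULift.{u} ℤ)) (X i)) :
    ∃ h', IsFramedTrivialization f s h' := by
  obtain ⟨a, haf, hah⟩ := H.exists_iso
  have hpoint (k : Fin 3) : ∃ (v : Fin 2 → R) (hv : IsUnimodular v),
      s k ≫ a.hom = point (.id R) v hv := by
    obtain ⟨i, hi⟩ := hchart k
    have hmem : Set.range (s k ≫ a.hom) ⊆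
        Proj.basicOpen (homogeneousSubmodule (Fin 2) R) (X i) := by
      rw [← toP1Z_preimage_basicOpen]
      rintro _ ⟨x, rfl⟩
      have hx := hi x
      rwa [← hah, ← Category.assoc] at hx
    obtain ⟨v, hvi, hv⟩ := exists_eq_point (.id R) _ (by rw [Category.assoc, haf, hs]; simp) hmem
    exact ⟨v, _, hv⟩
  choose v hv hsv using hpoint
  obtain ⟨θ, hθ, hθs⟩ := exists_iso_of_disjoint hv fun i j hij => by
    rw [← hsv, ← hsv]
    have hinv (k : Fin 3) : (s k ≫ a.hom) ≫ a.inv = 𝟙 _ ≫ s k := by simp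
    exact disjoint_range_of_comp_eq (hinv i) (hinv j) (hdisj i j hij)
  refine ⟨(a ≪≫ θ.symm).hom ≫ toP1Z R, isTrivialization_toP1Z.of_iso _ ?_, fun k => ?_⟩
  · rw [Iso.trans_hom, Category.assoc, Iso.symm_hom, (Iso.inv_comp_eq θ).2 hθ.symm, haf]
  · rw [Iso.trans_hom, Category.assoc, ← Category.assoc, hsv, ← hθs, Category.assoc,
      Iso.symm_hom, θ.hom_inv_id_assoc, point_toP1Z]

end Trivialization

section Gluing

variable {P S T T' Z : Scheme.{u}} {f : P ⟶ S}

/-- The section of `pullback f g ⟶ T` obtained from a section `s` of `f` by base change along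
`g : T ⟶ S`. -/
noncomputable def sectionBaseChange {s : S ⟶ P} (hs : s ≫ f = 𝟙 S) (g : T ⟶ S) :
    T ⟶ pullback f g :=
  pullback.lift (g ≫ s) (𝟙 T) (by rw [Category.assoc, hs, Category.comp_id, Category.id_comp])

@[simp]
theorem sectionBaseChange_fst {s : S ⟶ P} (hs : s ≫ f = 𝟙 S) (g : T ⟶ S) :
    sectionBaseChange hs g ≫ pullback.fst f g = g ≫ s :=
  pullback.lift_fst _ _ _

@[simp]
theorem sectionBaseChange_snd {s : S ⟶ P} (hs : s ≫ f = 𝟙 S) (g : T ⟶ S) :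
    sectionBaseChange hs g ≫ pullback.snd f g = 𝟙 T :=
  pullback.lift_snd _ _ _

variable (f) in
/-- The morphism of base changes of `f` induced by a morphism `t : T' ⟶ T` over `S`. -/
noncomputable def baseChangeMap (g : T ⟶ S) (g' : T' ⟶ S) (t : T' ⟶ T) (ht : t ≫ g = g') :
    pullback f g' ⟶ pullback f g :=
  pullback.lift (pullback.fst f g') (pullback.snd f g' ≫ t)
    (by rw [pullback.condition, Category.assoc, ht])

section BaseChangeMap

variable {g : T ⟶ S} {g' : T' ⟶ S} {t : T' ⟶ T} (ht : t ≫ g = g')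

@[simp]
theorem baseChangeMap_fst :
    baseChangeMap f g g' t ht ≫ pullback.fst f g = pullback.fst f g' :=
  pullback.lift_fst _ _ _

@[simp]
theorem baseChangeMap_snd :
    baseChangeMap f g g' t ht ≫ pullback.snd f g = pullback.snd f g' ≫ t :=
  pullback.lift_snd _ _ _

theorem isPullback_baseChangeMap :
    IsPullback (pullback.snd f g') (baseChangeMap f g g' t ht) t (pullback.snd f g) := by
  subst ht
  exact (IsPullback.of_right (by simpa using .of_hasPullback f (t ≫ g)) (baseChangeMap_snd rfl)
    (.of_hasPullback f g)).flip

theorem sectionBaseChange_baseChangeMap {s : S ⟶ P} (hs : s ≫ f = 𝟙 S) :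
    sectionBaseChange hs g' ≫ baseChangeMap f g g' t ht = t ≫ sectionBaseChange hs g := by
  apply pullback.hom_ext
  · simp [← ht]
  · simp [reassoc_of% (sectionBaseChange_snd hs g')]

end BaseChangeMap

theorem IsFramedTrivialization.unique {s : Fin 3 → (S ⟶ P)} (hs : ∀ k, s k ≫ f = 𝟙 S)
    {h h' : P ⟶ P1Z.{u}} (H : IsFramedTrivialization f s h)
    (H' : IsFramedTrivialization f s h') : h = h' := by
  let 𝒰 := S.affineOpenCover
  refine Scheme.Cover.hom_ext (𝒰.openCover.pullback₁ f) _ _ fun i => ?_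
  have hp := (IsPullback.of_hasPullback f (𝒰.f i)).flip
  exact unique_of_affine (R := 𝒰.X i) (fun k => sectionBaseChange_snd (hs k) (𝒰.f i))
    (H.baseChange hp fun k => sectionBaseChange_fst (hs k) _)
    (H'.baseChange hp fun k => sectionBaseChange_fst (hs k) _)

theorem IsFramedTrivialization.comp_eq_comp {s : Fin 3 → (S ⟶ P)} (hs : ∀ k, s k ≫ f = 𝟙 S)
    {g : T ⟶ S} {h : pullback f g ⟶ P1Z.{u}}
    (H : IsFramedTrivialization (pullback.snd f g) (fun k => sectionBaseChange (hs k) g) h)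
    {g' : T' ⟶ S} {h' : pullback f g' ⟶ P1Z.{u}}
    (H' : IsFramedTrivialization (pullback.snd f g') (fun k => sectionBaseChange (hs k) g') h')
    {b : Z ⟶ pullback f g} {b' : Z ⟶ pullback f g'}
    (hb : b ≫ pullback.fst f g = b' ≫ pullback.fst f g') : b ≫ h = b' ≫ h' := by
  let q : Z ⟶ S := b ≫ pullback.fst f g ≫ f
  let n : Z ⟶ pullback f q :=
    pullback.lift (b ≫ pullback.fst f g) (𝟙 Z) (by simp [q])
  have ht : (b ≫ pullback.snd f g) ≫ g = q := by simp [q, pullback.condition]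
  have ht' : (b' ≫ pullback.snd f g') ≫ g' = q := by
    simp [q, reassoc_of% hb, pullback.condition]
  have hn₁ : n ≫ pullback.fst f q = b ≫ pullback.fst f g := pullback.lift_fst _ _ _
  have hn₂ : n ≫ pullback.snd f q = 𝟙 Z := pullback.lift_snd _ _ _
  have hn : n ≫ baseChangeMap f g q _ ht = b := by
    apply pullback.hom_ext <;> simp [hn₁, reassoc_of% hn₂]
  have hn' : n ≫ baseChangeMap f g' q _ ht' = b' := by
    apply pullback.hom_ext <;> simp [hn₁, reassoc_of% hn₂, hb]
  have huniq := IsFramedTrivialization.unique (fun k => sectionBaseChange_snd (hs k) q)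
    (H.baseChange (isPullback_baseChangeMap ht) fun k => sectionBaseChange_baseChangeMap ht (hs k))
    (H'.baseChange (isPullback_baseChangeMap ht')
      fun k => sectionBaseChange_baseChangeMap ht' (hs k))
  rw [← hn, ← hn', Category.assoc, Category.assoc, huniq]

theorem exists_affine_forall_mem_basicOpen {ι : Type*} [Finite ι] (t : ι → (T ⟶ P1Z.{u}))
    (x : T) :
    ∃ (R : CommRingCat.{u}) (g : Spec R ⟶ T), IsOpenImmersion g ∧ x ∈ Set.range g ∧
      ∀ k, ∃ i : Fin 2, ∀ y, (g ≫ t k) y ∈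
        Proj.basicOpen (homogeneousSubmodule (Fin 2) (ULift.{u} ℤ)) (X i) := by
  choose c hc using fun k => exists_mem_basicOpen (t k x)
  let W : T.Opens :=
    ⨅ k, t k ⁻¹ᵁ Proj.basicOpen (homogeneousSubmodule (Fin 2) (ULift.{u} ℤ)) (X (c k))
  have hxW : x ∈ W := by
    rw [← SetLike.mem_coe, TopologicalSpace.Opens.coe_iInf]
    exact Set.mem_iInter.2 hc
  obtain ⟨R, g, hg, hxg, hgW⟩ := Scheme.exists_affine_mem_range_and_range_subset hxW
  exact ⟨R, g, hg, hxg, fun k => ⟨c k, fun y => (iInf_le _ k : W ≤ _) (hgW ⟨y, rfl⟩)⟩⟩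

theorem isTrivialization_P1proj (T : Scheme.{u}) :
    IsTrivialization (P1proj T) (pullback.snd (terminal.from T) (terminal.from P1Z.{u})) :=
  IsPullback.of_hasPullback _ _

theorem exists_isFramedTrivialization (hf : IsP1Bundle f) {s : Fin 3 → (S ⟶ P)}
    (hs : ∀ k, s k ≫ f = 𝟙 S)
    (hdisj : ∀ i j, i ≠ j → Disjoint (Set.range (s i)) (Set.range (s j))) (x : S) :
    ∃ (R : CommRingCat.{u}) (g : Spec R ⟶ S) (h : pullback f g ⟶ P1Z.{u}),
      IsOpenImmersion g ∧ x ∈ Set.range g ∧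
      IsFramedTrivialization (pullback.snd f g) (fun k => sectionBaseChange (hs k) g) h := by
  obtain ⟨U, hxU, e, he⟩ := hf x
  have hU := (isTrivialization_P1proj (U : Scheme.{u})).of_iso e he
  obtain ⟨R, g, hg, ⟨y, hy⟩, hchart⟩ := exists_affine_forall_mem_basicOpen
    (fun k => sectionBaseChange (hs k) U.ι ≫ e.hom ≫ pullback.snd _ _) ⟨x, hxU⟩
  have hg' := hU.baseChange (isPullback_baseChangeMap (f := f) (rfl : g ≫ U.ι = g ≫ U.ι))
  obtain ⟨h, H⟩ := exists_isFramedTrivialization_of_affine (R := R)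
    (fun k => sectionBaseChange_snd (hs k) (g ≫ U.ι))
    (fun i j hij => disjoint_range_of_comp_eq (sectionBaseChange_fst (hs i) _)
      (sectionBaseChange_fst (hs j) _) (hdisj i j hij)) hg' fun k => by
        rw [← Category.assoc, sectionBaseChange_baseChangeMap, Category.assoc]
        exact hchart k
  exact ⟨R, g ≫ U.ι, h, inferInstance, ⟨y, congr(U.ι $hy)⟩, H⟩

theorem exists_isTrivialization (hf : IsP1Bundle f) {s : Fin 3 → (S ⟶ P)}
    (hs : ∀ k, s k ≫ f = 𝟙 S)
    (hdisj : ∀ i j, i ≠ j → Disjoint (Set.range (s i)) (Set.range (s j))) :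
    ∃ h : P ⟶ P1Z.{u}, IsTrivialization f h := by
  choose R g h hg hx H using exists_isFramedTrivialization hf hs hdisj
  let 𝒰 : S.AffineOpenCover := { I₀ := S, X := R, f := g, idx := id, covers := hx }
  let 𝒱 : P.OpenCover := 𝒰.openCover.pullback₁ f
  have hoverlap (x y : S) : pullback.fst (pullback.fst f (g x)) (pullback.fst f (g y)) ≫ h x =
      pullback.snd (pullback.fst f (g x)) (pullback.fst f (g y)) ≫ h y :=
    (H x).comp_eq_comp hs (H y) pullback.condition
  let φ : P ⟶ P1Z.{u} := 𝒱.glueMorphisms h hoverlap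
  have hφ (x : S) : pullback.fst f (g x) ≫ φ = h x := 𝒱.ι_glueMorphisms h hoverlap x
  refine ⟨φ, isPullback_of_cover 𝒰.openCover (fun x => (IsPullback.of_hasPullback f (g x)).flip)
    fun (x : S) => ?_⟩
  have hglue : IsTrivialization (pullback.snd f (g x)) (pullback.fst f (g x) ≫ φ) :=
    (hφ x).symm ▸ (H x).isTrivialization
  exact terminalIsTerminal.hom_ext (g x ≫ terminal.from S) (terminal.from (Spec (R x))) ▸ hglue

end Gluing

end ProjSpace

/-- Let `P → S` be a `ℙ¹`-bundle over a scheme `S`. If `P → S` admits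
three sections whose set-theoretic images in `P` are pairwise disjoint, then `P` is
`S`-isomorphic to `ℙ¹_S`. -/
theorem stmt7 (S P : Scheme.{u}) (f : P ⟶ S) (hf : IsP1Bundle f)
    (s : Fin 3 → (S ⟶ P)) (hs : ∀ i, s i ≫ f = 𝟙 S)
    (hdisj : ∀ i j : Fin 3, i ≠ j →
      Disjoint (Set.range (s i).base) (Set.range (s j).base)) :
    ∃ α : P ⟶ P1 S, IsIso α ∧ α ≫ P1proj S = f := by
  obtain ⟨h, hh⟩ := ProjSpace.exists_isTrivialization hf hs hdisj
  let e : P ≅ P1 S := hh.isoPullback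
  exact ⟨e.hom, inferInstance, hh.isoPullback_hom_fst⟩
end
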